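/- Let γ0, γ1 ∈ ℝ satisfy −1 < γ0, γ1 < 1 and γ1 > γ0 − 2 (the open asymptotic-data triangle). Suppose (w0, w1) is a smooth solution of the radial tt* system (case 4a) on (0, ∞) such that w0(r) → 0 and w1(r) → 0 as r → ∞ and 2·w0(r)/ln r → γ0 and 2·w1(r)/ln r → γ1 as r → 0⁺. Then the Stokes asymptotics at infinity hold: (w0(r) + w1(r))·2^{3/4}·(π r)^{1/2}·e^{2√2 r} → −s1 and (w0(r) − w1(r))·2^{3/2}·(π r)^{1/2}·e^{4 r} → s2 as r → ∞, where (s1, s2) are given by the connection formula s1 = −2 cos(π(γ0+1)/4) − 2 cos(π(γ1+3)/4), s2 = −2 − 4 cos(π(γ0+1)/4)·cos(π(γ1+3)/4). -/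

import Mathlib

open Real Filter

/-- The radial tt* system (case 4a). -/
def IsRadialTTStar (w0 w1 : ℝ → ℝ) : Prop :=
  ∀ r : ℝ, 0 < r →
    (1/2) * deriv (deriv w0) r + (1/(2*r)) * deriv w0 r
        = Real.exp (4 * w0 r) - Real.exp (2 * w1 r - 2 * w0 r) ∧
    (1/2) * deriv (deriv w1) r + (1/(2*r)) * deriv w1 r
        = Real.exp (2 * w1 r - 2 * w0 r) - Real.exp (-(4 * w1 r))

namespace TT
open Set Topology
section generic
variable {R : Type*} [NormedRing R] [NormedAlgebra ℝ R] 

lemma radial_lip {ρ : ℝ} (hρ : 0 < ρ) (x y : R) :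
    ‖(ρ / max ρ ‖x‖) • x - (ρ / max ρ ‖y‖) • y‖ ≤ 2 * ‖x - y‖ := by
  have mx : 0 < max ρ ‖x‖ := lt_of_lt_of_le hρ (le_max_left _ _)
  have my : 0 < max ρ ‖y‖ := lt_of_lt_of_le hρ (le_max_left _ _)
  have e : (ρ / max ρ ‖x‖) • x - (ρ / max ρ ‖y‖) • y
      = (ρ / max ρ ‖x‖) • (x - y) + (ρ / max ρ ‖x‖ - ρ / max ρ ‖y‖) • y := by
    rw [smul_sub, sub_smul]; abel
  rw [e]
  refine (norm_add_le _ _).trans ?_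
  rw [norm_smul, norm_smul, Real.norm_eq_abs, Real.norm_eq_abs]
  have h1 : |ρ / max ρ ‖x‖| ≤ 1 := by
    rw [abs_of_pos (by positivity), div_le_one mx]; exact le_max_left _ _
  have h2 : |ρ / max ρ ‖x‖ - ρ / max ρ ‖y‖| * ‖y‖ ≤ ‖x - y‖ := by
    have e2 : ρ / max ρ ‖x‖ - ρ / max ρ ‖y‖
        = (ρ / max ρ ‖x‖) * ((max ρ ‖y‖ - max ρ ‖x‖) / max ρ ‖y‖) := by
      field_simp
    rw [e2, abs_mul, abs_div (max ρ ‖y‖ - max ρ ‖x‖), abs_of_pos my]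
    have h3 : |max ρ ‖y‖ - max ρ ‖x‖| ≤ ‖x - y‖ := by
      rw [abs_sub_comm]
      refine (abs_max_sub_max_le_max _ _ _ _).trans ?_
      simp [abs_norm_sub_norm_le]
    have h4 : ‖y‖ ≤ max ρ ‖y‖ := le_max_right _ _
    calc |ρ / max ρ ‖x‖| * (|max ρ ‖y‖ - max ρ ‖x‖| / max ρ ‖y‖) * ‖y‖
        ≤ 1 * (|max ρ ‖y‖ - max ρ ‖x‖| / max ρ ‖y‖) * max ρ ‖y‖ := by gcongr
      _ = |max ρ ‖y‖ - max ρ ‖x‖| := by field_simp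
      _ ≤ _ := h3
  nlinarith [norm_nonneg (x - y)]

/-- right-sided solutions of a linear ODE -/
def IsSol (A : ℝ → R) (a b : ℝ) (Φ : ℝ → R) : Prop :=
  ContinuousOn Φ (Icc a b) ∧ ∀ t ∈ Ico a b, HasDerivWithinAt Φ (A t * Φ t) (Ici t) t

lemma exists_sol [CompleteSpace R] (A : ℝ → R) (hA : Continuous A) {a b : ℝ} (hab : a ≤ b) :
    ∃ Φ : ℝ → R, Φ a = 1 ∧ IsSol A a b Φ := by
  obtain ⟨M, hM⟩ := isCompact_Icc.exists_bound_of_continuousOn (s := Icc a b) hA.continuousOn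
  have hM0 : 0 ≤ M := (norm_nonneg _).trans (hM a ⟨le_rfl, hab⟩)
  set ρ : ℝ := (‖(1:R)‖ + 1) * exp (M * (b - a)) with hρ
  have hρ0 : 0 < ρ := by positivity
  let f : ℝ → R → R := fun t X => A t * ((ρ / max ρ ‖X‖) • X)
  have hbd : ∀ X : R, ‖(ρ / max ρ ‖X‖) • X‖ ≤ ρ := by
    intro X
    have mx : 0 < max ρ ‖X‖ := lt_of_lt_of_le hρ0 (le_max_left _ _)
    rw [norm_smul, Real.norm_eq_abs, abs_of_pos (by positivity), div_mul_eq_mul_div, div_le_iff₀ mx]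
    gcongr; exact le_max_right _ _
  have hbd2 : ∀ X : R, ‖(ρ / max ρ ‖X‖) • X‖ ≤ ‖X‖ := by
    intro X
    have mx : 0 < max ρ ‖X‖ := lt_of_lt_of_le hρ0 (le_max_left _ _)
    rw [norm_smul, Real.norm_eq_abs, abs_of_pos (by positivity), div_mul_eq_mul_div, div_le_iff₀ mx]
    rw [mul_comm]
    gcongr; exact le_max_left _ _
  let L : NNReal := ⟨M * ρ, by positivity⟩
  let K : NNReal := ⟨M * 2, by positivity⟩
  let aa : NNReal := ⟨M * ρ * (b - a), by have := sub_nonneg.2 hab; positivity⟩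
  have hPL : IsPicardLindelof f (tmin := a) (tmax := b) ⟨a, le_rfl, hab⟩ (1 : R) aa 0 L K := by
    refine ⟨?_, ?_, ?_, ?_⟩
    · intro t ht
      apply LipschitzWith.lipschitzOnWith
      apply LipschitzWith.of_dist_le_mul
      intro X Y
      simp only [f, dist_eq_norm, ← mul_sub]
      refine (norm_mul_le _ _).trans ?_
      show _ ≤ M * 2 * _
      rw [mul_assoc]
      exact mul_le_mul (hM t ht) (radial_lip hρ0 X Y) (norm_nonneg _) hM0
    · intro X _
      exact (hA.mul continuous_const).continuousOn
    · intro t ht X _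
      refine (norm_mul_le _ _).trans ?_
      exact mul_le_mul (hM t ht) (hbd X) (norm_nonneg _) hM0
    · show M * ρ * max (b - a) (a - a) ≤ M * ρ * (b - a) - 0
      rw [sub_self, max_eq_left (sub_nonneg.2 hab), sub_zero]
  obtain ⟨Φ, h0, hΦ⟩ := hPL.exists_eq_forall_mem_Icc_hasDerivWithinAt₀
  have hc : ContinuousOn Φ (Icc a b) := fun t ht => (hΦ t ht).continuousWithinAt
  have hd : ∀ t ∈ Ico a b, HasDerivWithinAt Φ (f t (Φ t)) (Ici t) t := by
    intro t ht
    apply (hΦ t ⟨ht.1, ht.2.le⟩).mono_of_mem_nhdsWithin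
    exact Filter.mem_of_superset (Icc_mem_nhdsGE ht.2) (Icc_subset_Icc ht.1 le_rfl)
  have hb : ∀ t ∈ Icc a b, ‖Φ t‖ ≤ ρ := by
    have := norm_le_gronwallBound_of_norm_deriv_right_le (δ := ‖(1:R)‖) (K := M) (ε := 0) hc hd
      (by have h0' : Φ a = 1 := h0
          rw [h0']) (by
        intro t ht
        rw [add_zero]
        refine (norm_mul_le _ _).trans ?_
        exact mul_le_mul (hM t ⟨ht.1, ht.2.le⟩) (hbd2 _) (norm_nonneg _) hM0)
    intro t ht
    refine (this t ht).trans ?_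
    rw [gronwallBound_ε0, hρ]
    have : t - a ≤ b - a := by linarith [ht.2]
    gcongr
    linarith
  refine ⟨Φ, h0, hc, ?_⟩
  intro t ht
  have := hd t ht
  have e : f t (Φ t) = A t * Φ t := by
    simp only [f]
    rw [max_eq_left (hb t ⟨ht.1, ht.2.le⟩), div_self hρ0.ne', one_smul]
  rwa [e] at this

open Classical in
/-- transport of the linear ODE from `a` to `b` -/
noncomputable def solF (A : ℝ → R) (a b : ℝ) : ℝ → R :=
  if h : ∃ Φ : ℝ → R, Φ a = 1 ∧ IsSol A a b Φ then h.choose else 0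

lemma solF_spec [CompleteSpace R] (A : ℝ → R) (hA : Continuous A) {a b : ℝ} (hab : a ≤ b) :
    solF A a b a = 1 ∧ IsSol A a b (solF A a b) := by
  have h := exists_sol A hA hab
  unfold solF
  rw [dif_pos h]
  exact h.choose_spec

noncomputable def trans (A : ℝ → R) (a b : ℝ) : R := solF A a b b

lemma gron_le {K ε x : ℝ} (hK : 0 ≤ K) (hε : 0 ≤ ε) (_hx : 0 ≤ x) :
    gronwallBound 0 K ε x ≤ ε * x * exp (K * x) := by
  rcases hK.eq_or_lt with rfl | hK
  · simp [gronwallBound_K0]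
  · rw [gronwallBound_of_K_ne_0 hK.ne']
    simp only [zero_mul, zero_add]
    have h1 : exp (K * x) - 1 ≤ K * x * exp (K * x) := by
      have := Real.add_one_le_exp (-(K * x))
      have h2 : exp (-(K*x)) * exp (K * x) = 1 := by rw [← exp_add]; simp
      nlinarith [exp_pos (K*x)]
    calc ε / K * (exp (K * x) - 1) ≤ ε / K * (K * x * exp (K * x)) := by gcongr
      _ = _ := by field_simp

lemma trans_close [CompleteSpace R] (A : ℝ → R) (hA : Continuous A) {a b : ℝ} (hab : a ≤ b)
    {Ψ Ψ' : ℝ → R} (hΨ : ContinuousOn Ψ (Icc a b))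
    (hΨ' : ∀ t ∈ Ico a b, HasDerivWithinAt Ψ (Ψ' t) (Ici t) t)
    {K ε : ℝ} (hK0 : 0 ≤ K) (hε0 : 0 ≤ ε) (hK : ∀ t ∈ Icc a b, ‖A t‖ ≤ K)
    (hε : ∀ t ∈ Ico a b, ‖Ψ' t - A t * Ψ t‖ ≤ ε) :
    ‖Ψ b - trans A a b * Ψ a‖ ≤ ε * (b - a) * exp (K * (b - a)) := by
  obtain ⟨h0, hc, hd⟩ := solF_spec A hA hab
  set Φ := solF A a b
  have hcc : ContinuousOn (fun t => Ψ t - Φ t * Ψ a) (Icc a b) :=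
    hΨ.sub (hc.mul continuousOn_const)
  have hdd : ∀ t ∈ Ico a b, HasDerivWithinAt (fun t => Ψ t - Φ t * Ψ a)
      (Ψ' t - A t * Φ t * Ψ a) (Ici t) t := fun t ht =>
    (hΨ' t ht).sub ((hd t ht).mul_const _)
  have := norm_le_gronwallBound_of_norm_deriv_right_le (δ := 0) (K := K) (ε := ε) hcc hdd
    (by simp [h0]) (by
      intro t ht
      have e : Ψ' t - A t * Φ t * Ψ a = A t * (Ψ t - Φ t * Ψ a) + (Ψ' t - A t * Ψ t) := by
        noncomm_ring
      rw [e]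
      refine (norm_add_le _ _).trans (add_le_add ((norm_mul_le _ _).trans ?_) (hε t ht))
      gcongr
      exact hK t ⟨ht.1, ht.2.le⟩) b ⟨hab, le_rfl⟩
  exact this.trans (gron_le hK0 hε0 (sub_nonneg.2 hab))

end generic
end TT

namespace TT
open Set Topology
section generic
variable {R : Type*} [NormedRing R] [NormedAlgebra ℝ R] [CompleteSpace R]

/-- uniqueness form -/
lemma trans_eq (A : ℝ → R) (hA : Continuous A) {a b : ℝ} (hab : a ≤ b)
    {Ψ : ℝ → R} (hΨ : ContinuousOn Ψ (Icc a b))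
    (hΨ' : ∀ t ∈ Ico a b, HasDerivWithinAt Ψ (A t * Ψ t) (Ici t) t) :
    Ψ b = trans A a b * Ψ a := by
  obtain ⟨M, hM⟩ := isCompact_Icc.exists_bound_of_continuousOn (s := Icc a b) hA.continuousOn
  have hM0 : 0 ≤ M := (norm_nonneg _).trans (hM a ⟨le_rfl, hab⟩)
  have := trans_close A hA hab hΨ hΨ' hM0 le_rfl hM (by simp)
  simpa [sub_eq_zero] using this

/-- gauge transformation -/
lemma trans_gauge (A A2 : ℝ → R) (hA : Continuous A) (hA2 : Continuous A2) {a b : ℝ} (hab : a ≤ b)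
    {G G' : ℝ → R} (hG : ∀ t, HasDerivAt G (G' t) t) (h : ∀ t, A2 t * G t = G' t + G t * A t) :
    G b * trans A a b = trans A2 a b * G a := by
  obtain ⟨h0, hc, hd⟩ := solF_spec A hA hab
  have := trans_eq A2 hA2 hab (Ψ := fun t => G t * solF A a b t)
    (ContinuousOn.mul (fun t _ => (hG t).continuousAt.continuousWithinAt) hc) (by
      intro t ht
      have := (hG t).hasDerivWithinAt.mul (hd t ht)
      have e : A2 t * (G t * solF A a b t)
          = G' t * solF A a b t + G t * (A t * solF A a b t) := by
        rw [← mul_assoc, h, add_mul, mul_assoc]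
      rw [e]
      exact this)
  simpa [h0, trans] using this

/-- isomonodromy: derivative of the holonomy -/
lemma hol_deriv (A : ℝ → ℝ → R) {a b x : ℝ} (hab : a ≤ b) (hA : ∀ y, Continuous (A y))
    (B B' Ax : ℝ → R) (D : R) (hB : ∀ t, HasDerivAt B (B' t) t) (hAxc : Continuous Ax)
    (hAx : ∀ ε > 0, ∀ᶠ h in 𝓝 (0:ℝ), ∀ t ∈ Icc a b, ‖A (x + h) t - A x t - h • Ax t‖ ≤ ε * |h|)
    (hzc : ∀ t, Ax t = B' t + B t * A x t - A x t * B t)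
    (hD : D * B b = B a * D) :
    HasDerivAt (fun y => D * trans (A y) a b)
      (B a * (D * trans (A x) a b) - (D * trans (A x) a b) * B a) x := by
  obtain ⟨h0, hc, hd⟩ := solF_spec (A x) (hA x) hab
  set Φ := solF (A x) a b with hΦ
  have hBc : Continuous B := continuous_iff_continuousAt.2 fun t => (hB t).continuousAt
  obtain ⟨MA, hMA⟩ := isCompact_Icc.exists_bound_of_continuousOn (s := Icc a b) (hA x).continuousOn
  obtain ⟨MB, hMB⟩ := isCompact_Icc.exists_bound_of_continuousOn (s := Icc a b) hBc.continuousOn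
  obtain ⟨MX, hMX⟩ := isCompact_Icc.exists_bound_of_continuousOn (s := Icc a b) hAxc.continuousOn
  obtain ⟨MP, hMP⟩ := isCompact_Icc.exists_bound_of_continuousOn (s := Icc a b) hc
  have hMA0 : 0 ≤ MA := (norm_nonneg _).trans (hMA a ⟨le_rfl, hab⟩)
  have hMB0 : 0 ≤ MB := (norm_nonneg _).trans (hMB a ⟨le_rfl, hab⟩)
  have hMX0 : 0 ≤ MX := (norm_nonneg _).trans (hMX a ⟨le_rfl, hab⟩)
  have hMP0 : 0 ≤ MP := (norm_nonneg _).trans (hMP a ⟨le_rfl, hab⟩)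
  have hL : 0 ≤ b - a := sub_nonneg.2 hab
  -- main estimate
  have key : ∀ ε > 0, ∀ᶠ h in 𝓝 (0:ℝ),
      ‖(1 + h • B b) * trans (A x) a b - trans (A (x+h)) a b * (1 + h • B a)‖ ≤ ε * |h| := by
    intro ε hε
    set C : ℝ := (1 + MB) * MP * (b - a) * exp ((MA + MX + 1) * (b - a)) + 1 with hC
    have hC0 : 0 < C := by positivity
    set η := min 1 (ε / (2 * C)) with hη
    have hη0 : 0 < η := by positivity
    have hsm : ∀ᶠ h in 𝓝 (0:ℝ), |h| * (MX + 1) < η := by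
      have : Tendsto (fun h : ℝ => |h| * (MX + 1)) (𝓝 0) (𝓝 (|0| * (MX+1))) :=
        ((continuous_abs.mul continuous_const).tendsto 0)
      rw [abs_zero, zero_mul] at this
      exact this.eventually_lt_const hη0
    filter_upwards [hAx η hη0, hsm] with h h1 h2
    have hη1 : η ≤ 1 := min_le_left _ _
    have hdiff : ∀ t ∈ Icc a b, ‖A (x+h) t - A x t‖ ≤ |h| * (MX + 1) := by
      intro t ht
      have e : A (x+h) t - A x t = (A (x + h) t - A x t - h • Ax t) + h • Ax t := by abel
      rw [e]
      refine (norm_add_le _ _).trans ?_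
      rw [norm_smul, Real.norm_eq_abs]
      have := h1 t ht
      have := hMX t ht
      nlinarith [abs_nonneg h]
    have hd2 : ∀ t ∈ Ico a b, HasDerivWithinAt (fun t => (1 + h • B t) * Φ t)
        ((h • B' t) * Φ t + (1 + h • B t) * (A x t * Φ t)) (Ici t) t := by
      intro t ht
      have := (((hB t).const_smul h).const_add 1).hasDerivWithinAt.mul (hd t ht)
      exact this
    have := trans_close (A (x+h)) (hA _) hab (Ψ := fun t => (1 + h • B t) * Φ t)
      (ContinuousOn.mul (by fun_prop) hc) hd2 (K := MA + MX + 1) (ε := (1 + MB) * MP * (η * |h|))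
      (by positivity) (by positivity) (by
        intro t ht
        have e : A (x+h) t = A x t + (A (x+h) t - A x t) := by abel
        rw [e]
        refine (norm_add_le _ _).trans ?_
        have := hMA t ht
        have := hdiff t ht
        linarith) (by
        intro t ht
        have ht' : t ∈ Icc a b := ⟨ht.1, ht.2.le⟩
        have e : (h • B' t) * Φ t + (1 + h • B t) * (A x t * Φ t)
            - A (x+h) t * ((1 + h • B t) * Φ t)
            = -((A (x + h) t - A x t - h • Ax t) + (A (x+h) t - A x t) * (h • B t)) * Φ t := by
          rw [hzc t]
          simp only [smul_add, smul_sub, smul_mul_assoc, mul_smul_comm, add_mul, sub_mul,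
            mul_add, neg_mul, one_mul, mul_one, mul_assoc]
          abel
        rw [e]
        refine (norm_mul_le _ _).trans ?_
        rw [norm_neg]
        have f1 : ‖(A (x + h) t - A x t - h • Ax t) + (A (x+h) t - A x t) * (h • B t)‖
            ≤ (1 + MB) * (η * |h|) := by
          refine (norm_add_le _ _).trans ?_
          have g1 := h1 t ht'
          have g2 : ‖(A (x+h) t - A x t) * (h • B t)‖ ≤ η * (|h| * MB) := by
            refine (norm_mul_le _ _).trans ?_
            rw [norm_smul, Real.norm_eq_abs]
            have := hMB t ht'
            have := (hdiff t ht').trans h2.le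
            gcongr
          linarith
        calc _ ≤ (1 + MB) * (η * |h|) * MP := by
              gcongr
              exact hMP t ht'
          _ = _ := by ring)
    simp only [h0, mul_one] at this
    refine this.trans ?_
    have h3 : C * η ≤ ε := by
      have : η ≤ ε / (2 * C) := min_le_right _ _
      calc C * η ≤ C * (ε / (2 * C)) := by gcongr
        _ = ε / 2 := by field_simp
        _ ≤ ε := by linarith
    calc _ = (C - 1) * η * |h| := by rw [hC]; ring
      _ ≤ C * η * |h| := by gcongr; linarith
      _ ≤ _ := by gcongr
  -- consequence for T
  set T : ℝ → R := fun y => D * trans (A y) a b with hT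
  have key2 : ∀ ε > 0, ∀ᶠ h in 𝓝 (0:ℝ),
      ‖(1 + h • B a) * T x - T (x + h) * (1 + h • B a)‖ ≤ ε * |h| := by
    intro ε hε
    filter_upwards [key (ε / (‖D‖ + 1)) (by positivity)] with h hh
    have e : (1 + h • B a) * T x - T (x + h) * (1 + h • B a)
        = D * ((1 + h • B b) * trans (A x) a b - trans (A (x+h)) a b * (1 + h • B a)) := by
      simp only [hT, mul_sub, add_mul, mul_add, one_mul, mul_one, smul_mul_assoc, mul_smul_comm,
        mul_assoc]
      rw [← mul_assoc (B a) D, ← hD, mul_assoc]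
    rw [e]
    refine (norm_mul_le _ _).trans ?_
    calc ‖D‖ * _ ≤ (‖D‖ + 1) * (ε / (‖D‖ + 1) * |h|) := by gcongr; linarith
      _ = _ := by field_simp
  have hcont : ∀ ε > 0, ∀ᶠ h in 𝓝 (0:ℝ), ‖T (x + h) - T x‖ ≤ ε := by
    intro ε hε
    set C := 2 * ‖T x‖ * ‖B a‖ + 1 + 1 with hC
    have hC0 : 0 < C := by positivity
    have t1 : Tendsto (fun h : ℝ => |h| * ‖B a‖) (𝓝 0) (𝓝 (|0| * ‖B a‖)) :=
      ((continuous_abs.mul continuous_const).tendsto 0)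
    have t2 : Tendsto (fun h : ℝ => |h| * C) (𝓝 0) (𝓝 (|0| * C)) :=
      ((continuous_abs.mul continuous_const).tendsto 0)
    rw [abs_zero, zero_mul] at t1 t2
    filter_upwards [key2 1 one_pos, t1.eventually_lt_const (show (0:ℝ) < 1/2 by norm_num),
      t2.eventually_lt_const (show (0:ℝ) < ε/2 by positivity)] with h g1 g2 g3
    have e : T (x+h) - T x = -((1 + h • B a) * T x - T (x + h) * (1 + h • B a))
        + (h • B a * T x - T x * (h • B a)) - (T (x+h) - T x) * (h • B a) := by
      simp only [smul_sub, smul_mul_assoc, mul_smul_comm, add_mul, sub_mul,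
            mul_add, one_mul, mul_one]
      abel
    have n0 : ‖h • B a‖ = |h| * ‖B a‖ := by rw [norm_smul, Real.norm_eq_abs]
    have n1 : ‖T (x+h) - T x‖ ≤ 1 * |h| + (|h| * ‖B a‖ * ‖T x‖ + ‖T x‖ * (|h| * ‖B a‖))
        + ‖T (x+h) - T x‖ * (|h| * ‖B a‖) := by
      conv_lhs => rw [e]
      refine (norm_sub_le _ _).trans (add_le_add ((norm_add_le _ _).trans (add_le_add ?_
        ((norm_sub_le _ _).trans (add_le_add ?_ ?_)))) ?_)
      · rw [norm_neg]; exact g1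
      · rw [← n0]; exact norm_mul_le _ _
      · rw [← n0]; exact norm_mul_le _ _
      · rw [← n0]; exact norm_mul_le _ _
    have n2 := norm_nonneg (T (x+h) - T x)
    nlinarith [abs_nonneg h]
  rw [hasDerivAt_iff_isLittleO_nhds_zero, Asymptotics.isLittleO_iff]
  intro ε hε
  have hε' : 0 < ε / (2 * (‖B a‖ + 1)) := by positivity
  filter_upwards [key2 (ε/2) (by positivity), hcont _ hε'] with h g1 g2
  have e : T (x+h) - T x - h • (B a * T x - T x * B a)
      = -((1 + h • B a) * T x - T (x + h) * (1 + h • B a)) - (T (x+h) - T x) * (h • B a) := by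
    simp only [smul_sub, smul_mul_assoc, mul_smul_comm, add_mul, sub_mul,
            mul_add, neg_mul, one_mul, mul_one, mul_assoc]
    abel
  show ‖T (x+h) - T x - h • (B a * T x - T x * B a)‖ ≤ ε * ‖h‖
  rw [e, Real.norm_eq_abs]
  refine (norm_sub_le _ _).trans ?_
  rw [norm_neg]
  have n1 : ‖(T (x+h) - T x) * (h • B a)‖ ≤ ε / (2 * (‖B a‖ + 1)) * (|h| * (‖B a‖ + 1)) := by
    refine (norm_mul_le _ _).trans ?_
    rw [norm_smul, Real.norm_eq_abs]
    gcongr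
    linarith
  have : ε / (2 * (‖B a‖ + 1)) * (|h| * (‖B a‖ + 1)) = ε / 2 * |h| := by field_simp
  linarith

end generic
end TT

namespace TT
open Set Topology

lemma z_decay {z z1 z2 : ℝ → ℝ} {R κ : ℝ} (hR : 0 < R) (hκ : 0 < κ)
    (h1 : ∀ r ≥ R, HasDerivAt z (z1 r) r) (h2 : ∀ r ≥ R, HasDerivAt z1 (z2 r) r)
    (hz : ∀ r ≥ R, 0 ≤ z r) (hineq : ∀ r ≥ R, κ ^ 2 * z r ≤ z2 r + z1 r / r)
    (hlim : Tendsto z atTop (𝓝 0)) : ∃ C, ∀ r ≥ R, z r ≤ C * exp (-(κ * r)) := by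
  have hz1 : ∀ r ≥ R, z1 r ≤ 0 := by
    have hm : MonotoneOn (fun r => r * z1 r) (Ici R) := by
      apply monotoneOn_of_hasDerivWithinAt_nonneg (f' := fun r => 1 * z1 r + r * z2 r) (convex_Ici R)
      · intro r hr
        exact ((hasDerivAt_id r).mul (h2 r hr)).continuousAt.continuousWithinAt
      · intro r hr
        rw [interior_Ici] at hr
        exact ((hasDerivAt_id r).mul (h2 r hr.le)).hasDerivWithinAt
      · intro r hr
        rw [interior_Ici] at hr
        have hr' : R < r := hr
        have hr0 : 0 < r := by linarith
        have := (mul_nonneg (sq_nonneg κ) (hz r hr'.le)).trans (hineq r hr'.le)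
        have h := mul_nonneg hr0.le this
        rw [mul_add, mul_div_cancel₀ _ hr0.ne'] at h
        show 0 ≤ 1 * z1 r + r * z2 r
        linarith
    intro r0 hr0
    by_contra hcon
    push Not at hcon
    have hpos : ∀ r ≥ r0, 0 < z1 r := by
      intro r hr
      have := hm (show R ≤ r0 from hr0) (show R ≤ r from hr0.le.trans hr) hr
      have hr0' : 0 < r0 := by linarith
      have h3 : 0 < r0 * z1 r0 := by positivity
      have h4 : 0 < r * z1 r := lt_of_lt_of_le h3 this
      exact pos_of_mul_pos_right h4 (by linarith)
    have hs : StrictMonoOn z (Ici r0) := by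
      apply strictMonoOn_of_hasDerivWithinAt_pos (f' := z1) (convex_Ici r0)
      · intro r hr
        exact (h1 r (hr0.le.trans hr)).continuousAt.continuousWithinAt
      · intro r hr
        rw [interior_Ici] at hr
        exact (h1 r (hr0.le.trans hr.le)).hasDerivWithinAt
      · intro r hr
        rw [interior_Ici] at hr
        exact hpos r hr.le
    have a1 : z r0 < z (r0 + 1) := hs (show r0 ≤ r0 from le_rfl) (show r0 ≤ r0+1 by linarith) (by linarith)
    have a2 : z (r0 + 1) ≤ 0 := by
      apply ge_of_tendsto hlim
      filter_upwards [eventually_ge_atTop (r0+1)] with r hr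
      exact hs.monotoneOn (show r0 ≤ r0+1 by linarith) (show r0 ≤ r by linarith) hr
    linarith [hz r0 hr0]
  have hF : ∀ r ≥ R, κ ^ 2 * z r ^ 2 ≤ z1 r ^ 2 := by
    have hm : AntitoneOn (fun r => z1 r ^ 2 - κ ^ 2 * z r ^ 2) (Ici R) := by
      apply antitoneOn_of_hasDerivWithinAt_nonpos
        (f' := fun r => 2 * z1 r * z2 r - κ ^ 2 * (2 * z r * z1 r)) (convex_Ici R)
      · intro r hr
        exact (((h2 r hr).pow 2).sub (((h1 r hr).pow 2).const_mul (κ^2))).continuousAt.continuousWithinAt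
      · intro r hr
        rw [interior_Ici] at hr
        have := ((h2 r hr.le).pow 2).sub (((h1 r hr.le).pow 2).const_mul (κ^2))
        refine (this.congr_deriv ?_).hasDerivWithinAt
        norm_num
      · intro r hr
        rw [interior_Ici] at hr
        have hr' : R < r := hr
        have hr0 : 0 < r := by linarith
        have a1 := hineq r hr'.le
        have a2 := hz1 r hr'.le
        have a3 : z1 r / r ≤ 0 := div_nonpos_of_nonpos_of_nonneg a2 hr0.le
        show 2 * z1 r * z2 r - κ ^ 2 * (2 * z r * z1 r) ≤ 0
        nlinarith
    intro r0 hr0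
    by_contra hcon
    push Not at hcon
    have l1 : Tendsto (fun r => - (κ ^ 2 * z r ^ 2)) atTop (𝓝 (-(κ^2 * 0 ^ 2))) :=
      ((hlim.pow 2).const_mul _).neg
    have l2 : -(κ^2 * (0:ℝ) ^ 2) ≤ z1 r0 ^ 2 - κ ^ 2 * z r0 ^ 2 := by
      apply le_of_tendsto l1
      filter_upwards [eventually_ge_atTop r0] with r hr
      have := hm (show R ≤ r0 from hr0) (show R ≤ r from hr0.le.trans hr) hr
      simp only at this
      nlinarith [sq_nonneg (z1 r)]
    norm_num at l2
    linarith
  have hm : AntitoneOn (fun r => z r * exp (κ * r)) (Ici R) := by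
    have hd : ∀ r ≥ R, HasDerivAt (fun r => z r * exp (κ * r))
        (z1 r * exp (κ * r) + z r * (exp (κ * r) * (κ * 1))) r := by
      intro r hr
      exact (h1 r hr).mul (((hasDerivAt_id r).const_mul κ).exp)
    apply antitoneOn_of_hasDerivWithinAt_nonpos (convex_Ici R)
      (f' := fun r => z1 r * exp (κ * r) + z r * (exp (κ * r) * (κ * 1)))
    · intro r hr
      exact (hd r hr).continuousAt.continuousWithinAt
    · intro r hr
      rw [interior_Ici] at hr
      exact (hd r hr.le).hasDerivWithinAt
    · intro r hr
      rw [interior_Ici] at hr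
      have hr' : R < r := hr
      have a1 := hF r hr'.le
      have a2 := hz1 r hr'.le
      have a3 := hz r hr'.le
      have a4 : κ * z r ≤ - z1 r := by
        apply le_of_sq_le_sq _ (by linarith)
        nlinarith
      have := exp_pos (κ * r)
      show z1 r * exp (κ * r) + z r * (exp (κ * r) * (κ * 1)) ≤ 0
      nlinarith
  refine ⟨z R * exp (κ * R), fun r hr => ?_⟩
  have := hm (show R ≤ R from le_rfl) (show R ≤ r from hr) hr
  simp only at this
  calc z r = z r * exp (κ * r) * exp (-(κ * r)) := by
        rw [mul_assoc, ← exp_add]; simp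
    _ ≤ _ := by gcongr

lemma no_max {ψ ψ1 : ℝ → ℝ} {r0 p : ℝ} (hψ : ∀ᶠ r in 𝓝 r0, HasDerivAt ψ (ψ1 r) r)
    (h2 : HasDerivAt ψ1 p r0) (hp : 0 < p) : ¬ IsLocalMax ψ r0 := by
  intro hmax
  have e : deriv ψ =ᶠ[𝓝 r0] ψ1 := by
    filter_upwards [hψ] with r hr using hr.deriv
  have hd : deriv (deriv ψ) r0 = p := by
    rw [e.deriv_eq]; exact h2.deriv
  have h0 : deriv ψ r0 = 0 := hmax.deriv_eq_zero
  have hmin := isLocalMin_of_deriv_deriv_pos (f := ψ) (x₀ := r0) (by rw [hd]; exact hp) h0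
    hψ.self_of_nhds.continuousAt
  have hc : ψ =ᶠ[𝓝 r0] fun _ => ψ r0 := by
    filter_upwards [hmax, hmin] with r a b using le_antisymm a b
  have : deriv (deriv ψ) r0 = 0 := by
    have h3 : deriv ψ =ᶠ[𝓝 r0] deriv (fun _ => ψ r0) := hc.deriv
    rw [h3.deriv_eq]; simp
  linarith

lemma max_principle {ψ ψ1 ψ2 : ℝ → ℝ} {R : ℝ} (h1 : ∀ r ≥ R, HasDerivAt ψ (ψ1 r) r)
    (h2 : ∀ r ≥ R, HasDerivAt ψ1 (ψ2 r) r) (hpos : ∀ r ≥ R, 0 < ψ r → 0 < ψ2 r)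
    (hR : ψ R ≤ 0) (hlim : Tendsto ψ atTop (𝓝 0)) : ∀ r ≥ R, ψ r ≤ 0 := by
  intro s hs
  by_contra hcon
  push Not at hcon
  have hRs : R < s := lt_of_le_of_ne hs (by rintro rfl; linarith)
  obtain ⟨R2, hR2⟩ := ((hlim.eventually_lt_const hcon).and (eventually_gt_atTop s)).exists
  have hc : ContinuousOn ψ (Icc R R2) := fun r hr => (h1 r hr.1).continuousAt.continuousWithinAt
  obtain ⟨r0, hr0, hmax⟩ := isCompact_Icc.exists_isMaxOn ⟨s, hRs.le, hR2.2.le⟩ hc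
  have hge : ψ s ≤ ψ r0 := hmax ⟨hRs.le, hR2.2.le⟩
  have hl : R < r0 := lt_of_le_of_ne hr0.1 (by rintro rfl; linarith)
  have hr : r0 < R2 := lt_of_le_of_ne hr0.2 (by rintro rfl; linarith [hR2.1])
  refine no_max (ψ1 := ψ1) (p := ψ2 r0) ?_ (h2 r0 hl.le) (hpos r0 hl.le (by linarith))
    (hmax.isLocalMax (Icc_mem_nhds hl hr))
  filter_upwards [Ioi_mem_nhds hl] with r hr using h1 r (le_of_lt hr)


lemma conv_of_deriv {M M1 : ℝ → ℝ} {R c : ℝ} (hR : 0 < R) (h1 : ∀ r ≥ R, HasDerivAt M (M1 r) r)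
    (hb : ∀ r ≥ R, |M1 r| ≤ c / r ^ 2) : ∃ L, Tendsto M atTop (𝓝 L) := by
  have hc : 0 ≤ c := by
    have := (abs_nonneg _).trans (hb R le_rfl)
    have h3 : 0 ≤ c / R ^ 2 * R ^ 2 := by positivity
    rwa [div_mul_cancel₀ _ (by positivity)] at h3
  have hdr : ∀ r ≥ R, HasDerivAt (fun r : ℝ => c / r) (-(c / r ^ 2)) r := by
    intro r hr
    have hr0 : r ≠ 0 := by linarith
    have := (hasDerivAt_inv hr0).const_mul c
    refine (this.congr_deriv ?_)
    field_simp
  have hmono : MonotoneOn (fun r => M r - c / r) (Ici R) := by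
    apply monotoneOn_of_hasDerivWithinAt_nonneg (f' := fun r => M1 r - -(c / r^2)) (convex_Ici R)
    · intro r hr
      exact ((h1 r hr).sub (hdr r hr)).continuousAt.continuousWithinAt
    · intro r hr
      rw [interior_Ici] at hr
      exact ((h1 r hr.le).sub (hdr r hr.le)).hasDerivWithinAt
    · intro r hr
      rw [interior_Ici] at hr
      have := (abs_le.1 (hb r hr.le)).1
      show 0 ≤ M1 r - -(c / r^2)
      linarith
  have hanti : AntitoneOn (fun r => M r + c / r) (Ici R) := by
    apply antitoneOn_of_hasDerivWithinAt_nonpos (f' := fun r => M1 r + -(c / r^2)) (convex_Ici R)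
    · intro r hr
      exact ((h1 r hr).add (hdr r hr)).continuousAt.continuousWithinAt
    · intro r hr
      rw [interior_Ici] at hr
      exact ((h1 r hr.le).add (hdr r hr.le)).hasDerivWithinAt
    · intro r hr
      rw [interior_Ici] at hr
      have := (abs_le.1 (hb r hr.le)).2
      show M1 r + -(c / r^2) ≤ 0
      linarith
  have hg : Monotone (fun r => M (max r R) - c / (max r R)) := by
    intro r s hrs
    exact hmono (show R ≤ max r R from le_max_right _ _) (show R ≤ max s R from le_max_right _ _) (max_le_max_right _ hrs)
  have hbd : BddAbove (range (fun r => M (max r R) - c / (max r R))) := by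
    refine ⟨M R + c / R, ?_⟩
    rintro _ ⟨r, rfl⟩
    have := hanti (show R ≤ R from le_rfl) (show R ≤ max r R from le_max_right _ _) (le_max_right _ _)
    simp only at this ⊢
    have h3 : 0 ≤ c / (max r R) := by
      have : 0 < max r R := lt_of_lt_of_le hR (le_max_right _ _)
      positivity
    linarith
  have ht := tendsto_atTop_ciSup hg hbd
  have ht2 : Tendsto (fun r : ℝ => c / r) atTop (𝓝 0) := tendsto_const_nhds.div_atTop tendsto_id
  refine ⟨_, (ht.add ht2).congr' ?_⟩
  filter_upwards [eventually_ge_atTop R] with r hr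
  rw [max_eq_left hr]; ring

lemma exp_neg_lim {k : ℝ} (hk : 0 < k) : Tendsto (fun r : ℝ => exp (-(k * r))) atTop (𝓝 0) :=
  tendsto_exp_neg_atTop_nhds_zero.comp (tendsto_id.const_mul_atTop hk)

lemma hasDerivAt_expk (k r : ℝ) : HasDerivAt (fun r => exp (k * r)) (exp (k * r) * k) r := by
  simpa using ((hasDerivAt_id r).const_mul k).exp

/-- one-sided barrier -/
lemma barrier {y y1 y2 : ℝ → ℝ} {R k c : ℝ} (hR : 0 < R) (hk : 0 < k) (hc : 0 < c)
    (hRb : 2 * (c / k) ≤ R) (hRc : c < k ^ 2 * R ^ 2)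
    (h1 : ∀ r ≥ R, HasDerivAt y (y1 r) r) (h2 : ∀ r ≥ R, HasDerivAt y1 (y2 r) r)
    (hineq : ∀ r ≥ R, |y2 r - k ^ 2 * y r| ≤ c / r ^ 2 * |y r| + c * exp (-(k * r)) / r ^ 2)
    (hlim : Tendsto y atTop (𝓝 0)) : ∃ C, ∀ r ≥ R, y r ≤ C * exp (-(k * r)) := by
  set b := c / k with hb
  have hb0 : 0 < b := by positivity
  set C := max 1 (2 * |y R| * exp (k * R)) with hC
  have hC1 : 1 ≤ C := le_max_left _ _
  have hexp : ∀ r, exp (-(k * r)) = exp ((-k) * r) := fun r => by ring_nf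
  let φ : ℝ → ℝ := fun r => C * exp ((-k) * r) * (1 - b / r)
  let φ1 : ℝ → ℝ := fun r => C * exp ((-k) * r) * (-k * (1 - b / r) + b / r ^ 2)
  let φ2 : ℝ → ℝ := fun r => C * exp ((-k) * r) *
    (k ^ 2 * (1 - b / r) - 2 * k * b / r ^ 2 - 2 * b / r ^ 3)
  have hdr : ∀ r ≥ R, HasDerivAt (fun r : ℝ => 1 - b / r) (b / r ^ 2) r := by
    intro r hr
    have hr0 : r ≠ 0 := by linarith
    have := ((hasDerivAt_inv hr0).const_mul b).const_sub 1
    refine (this.congr_deriv ?_)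
    field_simp
  have hdr2 : ∀ r ≥ R, HasDerivAt (fun r : ℝ => b / r ^ 2) (-2 * b / r ^ 3) r := by
    intro r hr
    have hr0 : r ≠ 0 := by linarith
    have := ((hasDerivAt_pow 2 r).inv (pow_ne_zero 2 hr0)).const_mul b
    refine (this.congr_deriv ?_)
    field_simp
    norm_num
    ring
  have hφ : ∀ r ≥ R, HasDerivAt φ (φ1 r) r := by
    intro r hr
    have := ((hasDerivAt_expk (-k) r).const_mul C).mul (hdr r hr)
    refine (this.congr_deriv ?_)
    simp only [φ1]; ring
  have hφ1 : ∀ r ≥ R, HasDerivAt φ1 (φ2 r) r := by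
    intro r hr
    have hr0 : r ≠ 0 := by linarith
    have := ((hasDerivAt_expk (-k) r).const_mul C).mul (((hdr r hr).const_mul (-k)).add (hdr2 r hr))
    refine (this.congr_deriv ?_)
    simp only [φ2]
    simp only [Pi.add_apply]
    field_simp
    ring
  have hhalf : ∀ r ≥ R, 1/2 ≤ 1 - b / r := by
    intro r hr
    have hr0 : 0 < r := by linarith
    have : b / r ≤ 1/2 := by rw [div_le_iff₀ hr0]; linarith
    linarith
  refine ⟨C, ?_⟩
  have hmain : ∀ r ≥ R, y r - φ r ≤ 0 := by
    apply max_principle (ψ := fun r => y r - φ r) (ψ1 := fun r => y1 r - φ1 r)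
      (ψ2 := fun r => y2 r - φ2 r)
      (fun r hr => (h1 r hr).sub (hφ r hr)) (fun r hr => (h2 r hr).sub (hφ1 r hr))
    · intro r hr hpos
      have hr0 : 0 < r := by linarith
      have e1 : 0 < φ r := by
        have := hhalf r hr
        have h3 : 0 < 1 - b / r := by linarith
        have : 0 < C := by linarith
        positivity
      have e2 : φ r < y r := by linarith
      have e3 := (abs_le.1 (hineq r hr)).1
      rw [abs_of_pos (e1.trans e2)] at e3
      have e4 : 0 < k ^ 2 - c / r ^ 2 := by
        rw [sub_pos, div_lt_iff₀ (by positivity)]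
        have : R ^ 2 ≤ r ^ 2 := by gcongr
        nlinarith [sq_nonneg k]
      have e5 : (k ^ 2 - c / r ^ 2) * φ r < (k ^ 2 - c / r ^ 2) * y r := by gcongr
      have e6 : φ2 r + c * exp (-(k * r)) / r ^ 2 ≤ (k ^ 2 - c / r ^ 2) * φ r := by
        have hkb : k * b = c := by rw [hb]; field_simp
        have : (k ^ 2 - c / r ^ 2) * φ r - (φ2 r + c * exp (-(k * r)) / r ^ 2)
            = exp (-k * r) / r ^ 2 * (C * (2 * (k * b) - c + (c * b + 2 * b) / r) - c) := by
          simp only [φ, φ2, hexp]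
          field_simp
          ring
        have h9 : 0 ≤ exp (-k * r) / r ^ 2 * (C * (2 * (k * b) - c + (c * b + 2 * b) / r) - c) := by
          rw [hkb]
          have : 0 ≤ (c * b + 2 * b) / r := by positivity
          have h8 : c ≤ C * (2 * c - c + (c * b + 2 * b) / r) := by
            calc c = 1 * c := by ring
              _ ≤ C * (2 * c - c + (c * b + 2 * b) / r) := by
                apply mul_le_mul hC1 (by linarith) hc.le (by linarith)
          have : 0 ≤ C * (2 * c - c + (c * b + 2 * b) / r) - c := by linarith
          positivity
        linarith
      show 0 < y2 r - φ2 r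
      linarith
    · have h3 := hhalf R le_rfl
      have h4 : |y R| ≤ φ R := by
        simp only [φ]
        have h5 : 2 * |y R| * exp (k * R) ≤ C := le_max_right _ _
        have h6 : exp (k * R) * exp (-k * R) = 1 := by rw [← exp_add]; simp
        calc |y R| = 2 * |y R| * (exp (k * R) * exp (-k * R)) * (1/2) := by rw [h6]; ring
          _ = 2 * |y R| * exp (k * R) * exp (-k * R) * (1/2) := by ring
          _ ≤ C * exp (-k * R) * (1 - b / R) := by gcongr
      linarith [le_abs_self (y R)]
    · have l1 : Tendsto φ atTop (𝓝 (C * 0 * (1 - 0))) := by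
        apply Tendsto.mul
        · apply Tendsto.const_mul
          simpa [hexp] using exp_neg_lim hk
        · exact tendsto_const_nhds.sub (tendsto_const_nhds.div_atTop tendsto_id)
      have := hlim.sub l1
      simpa using this
  intro r hr
  have hr0 : 0 < r := by linarith
  have := hmain r hr
  have h3 : φ r ≤ C * exp (-(k * r)) := by
    simp only [φ, hexp]
    have : 0 ≤ b / r := by positivity
    have : 1 - b / r ≤ 1 := by linarith
    calc _ ≤ C * exp (-k * r) * 1 := by gcongr
      _ = _ := by ring
  linarith

lemma decay_asymp {y y1 y2 : ℝ → ℝ} {R k c : ℝ} (hR : 0 < R) (hk : 0 < k) (hc : 0 < c)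
    (h1 : ∀ r ≥ R, HasDerivAt y (y1 r) r) (h2 : ∀ r ≥ R, HasDerivAt y1 (y2 r) r)
    (hineq : ∀ r ≥ R, |y2 r - k ^ 2 * y r| ≤ c / r ^ 2 * |y r| + c * exp (-(k * r)) / r ^ 2)
    (hlim : Tendsto y atTop (𝓝 0)) :
    ∃ A, Tendsto (fun r => exp (k * r) * y r) atTop (𝓝 A) ∧
      Tendsto (fun r => exp (k * r) * y1 r) atTop (𝓝 (-k * A)) := by
  obtain ⟨R', hR'1, hR'2, hR'3⟩ : ∃ R' ≥ R, 2 * (c / k) ≤ R' ∧ c < k ^ 2 * R' ^ 2 := by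
    have : Tendsto (fun r : ℝ => k ^ 2 * r ^ 2) atTop atTop :=
      (tendsto_pow_atTop two_ne_zero).const_mul_atTop (by positivity)
    obtain ⟨r, h⟩ := ((eventually_ge_atTop R).and ((eventually_ge_atTop (2 * (c/k))).and
      (this.eventually_gt_atTop c))).exists
    exact ⟨r, h.1, h.2.1, h.2.2⟩
  have hR'0 : 0 < R' := by linarith
  obtain ⟨C1, hC1⟩ := barrier hR'0 hk hc hR'2 hR'3 (fun r hr => h1 r (hR'1.le.trans hr))
    (fun r hr => h2 r (hR'1.le.trans hr)) (fun r hr => hineq r (hR'1.le.trans hr)) hlim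
  obtain ⟨C2, hC2⟩ := barrier (y := fun r => - y r) (y1 := fun r => - y1 r) (y2 := fun r => - y2 r)
    hR'0 hk hc hR'2 hR'3 (fun r hr => (h1 r (hR'1.le.trans hr)).neg)
    (fun r hr => (h2 r (hR'1.le.trans hr)).neg) (fun r hr => by
      have := hineq r (hR'1.le.trans hr)
      rw [abs_neg, show - y2 r - k ^ 2 * - y r = -(y2 r - k ^ 2 * y r) by ring, abs_neg]
      exact this) (by simpa using hlim.neg)
  set C := max 1 (max C1 C2) with hC
  have hC0 : 0 < C := lt_of_lt_of_le one_pos (le_max_left _ _)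
  have hyC : ∀ r ≥ R', |y r| ≤ C * exp (-(k * r)) := by
    intro r hr
    have a1 := hC1 r hr
    have a2 := hC2 r hr
    have b1 : C1 ≤ C := (le_max_left _ _).trans (le_max_right _ _)
    have b2 : C2 ≤ C := (le_max_right _ _).trans (le_max_right _ _)
    have := exp_pos (-(k*r))
    rw [abs_le]
    constructor <;> nlinarith
  set c' := c * C + c with hc'
  have hc'0 : 0 < c' := by positivity
  have hf : ∀ r ≥ R', |exp (k * r) * (y2 r - k ^ 2 * y r)| ≤ c' / r ^ 2 := by
    intro r hr
    have hr0 : 0 < r := by linarith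
    rw [abs_mul, abs_of_pos (exp_pos _)]
    have h6 : exp (k * r) * exp (-(k * r)) = 1 := by rw [← exp_add]; simp
    calc exp (k * r) * |y2 r - k ^ 2 * y r|
        ≤ exp (k * r) * (c / r ^ 2 * (C * exp (-(k * r))) + c * exp (-(k * r)) / r ^ 2) := by
          gcongr
          refine (hineq r (hR'1.le.trans hr)).trans ?_
          gcongr
          exact hyC r hr
      _ = (exp (k * r) * exp (-(k * r))) * (c' / r ^ 2) := by rw [hc']; ring
      _ = _ := by rw [h6, one_mul]
  let M : ℝ → ℝ := fun r => exp (k * r) * (y1 r - k * y r)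
  obtain ⟨L, hL⟩ := conv_of_deriv (M := M) (M1 := fun r => exp (k * r) * (y2 r - k ^ 2 * y r))
    hR'0 (by
      intro r hr
      have := (hasDerivAt_expk k r).mul ((h2 r (hR'1.le.trans hr)).sub
        ((h1 r (hR'1.le.trans hr)).const_mul k))
      refine this.congr_deriv ?_
      simp only [Pi.sub_apply]
      ring) hf
  -- y1 tends to zero
  have hy1 : Tendsto y1 atTop (𝓝 0) := by
    have t1 : Tendsto (fun r => M r * exp (-(k * r)) + k * y r) atTop (𝓝 (L * 0 + k * 0)) :=
      (hL.mul (exp_neg_lim hk)).add (hlim.const_mul k)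
    rw [mul_zero, mul_zero, add_zero] at t1
    refine t1.congr fun r => ?_
    have h6 : exp (k * r) * exp (-(k * r)) = 1 := by rw [← exp_add]; simp
    simp only [M]
    linear_combination (y1 r - k * y r) * h6
  let s : ℝ → ℝ := fun r => exp ((-k) * r) * (y1 r + k * y r)
  have hs0 : Tendsto s atTop (𝓝 0) := by
    have := (exp_neg_lim hk).mul (hy1.add (hlim.const_mul k))
    simp only [mul_zero, add_zero] at this
    refine this.congr fun r => ?_
    simp only [s]; ring_nf
  have hsd : ∀ r ≥ R', HasDerivAt s (exp ((-k) * r) * (y2 r - k ^ 2 * y r)) r := by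
    intro r hr
    have := (hasDerivAt_expk (-k) r).mul ((h2 r (hR'1.le.trans hr)).add
        ((h1 r (hR'1.le.trans hr)).const_mul k))
    refine this.congr_deriv ?_
    simp only [Pi.add_apply]
    ring
  have hsb : ∀ r0 ≥ R', |s r0| ≤ c' / (2 * k * r0 ^ 2) * exp ((-(2 * k)) * r0) := by
    intro r0 hr0
    have hr00 : 0 < r0 := by linarith
    set κ := c' / (2 * k * r0 ^ 2) with hκ
    have hbd : ∀ r ≥ r0, |exp ((-k) * r) * (y2 r - k ^ 2 * y r)| ≤ 2 * k * κ * exp ((-(2*k)) * r) := by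
      intro r hr
      have e : exp ((-k) * r) * (y2 r - k ^ 2 * y r)
          = exp ((-(2*k)) * r) * (exp (k * r) * (y2 r - k ^ 2 * y r)) := by
        rw [← mul_assoc, ← exp_add]; ring_nf
      rw [e, abs_mul, abs_of_pos (exp_pos _), mul_comm]
      gcongr
      refine (hf r (hr0.le.trans hr)).trans ?_
      have : 2 * k * κ = c' / r0 ^ 2 := by rw [hκ]; field_simp
      rw [this]
      gcongr
    have hle : Tendsto (fun r => exp ((-(2 * k)) * r)) atTop (𝓝 0) := by
      have := exp_neg_lim (show 0 < 2 * k by positivity)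
      refine this.congr fun r => ?_
      ring_nf
    have hA : AntitoneOn (fun r => s r + κ * exp ((-(2 * k)) * r)) (Ici r0) := by
      have hd : ∀ r ≥ r0, HasDerivAt (fun r => s r + κ * exp ((-(2 * k)) * r))
          (exp ((-k) * r) * (y2 r - k ^ 2 * y r) + κ * (exp ((-(2 * k)) * r) * (-(2*k)))) r :=
        fun r hr => (hsd r (hr0.le.trans hr)).add ((hasDerivAt_expk _ r).const_mul κ)
      apply antitoneOn_of_hasDerivWithinAt_nonpos (convex_Ici r0) (f' := fun r =>
        exp ((-k) * r) * (y2 r - k ^ 2 * y r) + κ * (exp ((-(2 * k)) * r) * (-(2*k))))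
      · exact fun r hr => (hd r hr).continuousAt.continuousWithinAt
      · intro r hr
        rw [interior_Ici] at hr
        exact (hd r hr.le).hasDerivWithinAt
      · intro r hr
        rw [interior_Ici] at hr
        have := (abs_le.1 (hbd r hr.le)).2
        linarith
    have hB : MonotoneOn (fun r => s r - κ * exp ((-(2 * k)) * r)) (Ici r0) := by
      have hd : ∀ r ≥ r0, HasDerivAt (fun r => s r - κ * exp ((-(2 * k)) * r))
          (exp ((-k) * r) * (y2 r - k ^ 2 * y r) - κ * (exp ((-(2 * k)) * r) * (-(2*k)))) r :=
        fun r hr => (hsd r (hr0.le.trans hr)).sub ((hasDerivAt_expk _ r).const_mul κ)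
      apply monotoneOn_of_hasDerivWithinAt_nonneg (convex_Ici r0) (f' := fun r =>
        exp ((-k) * r) * (y2 r - k ^ 2 * y r) - κ * (exp ((-(2 * k)) * r) * (-(2*k))))
      · exact fun r hr => (hd r hr).continuousAt.continuousWithinAt
      · intro r hr
        rw [interior_Ici] at hr
        exact (hd r hr.le).hasDerivWithinAt
      · intro r hr
        rw [interior_Ici] at hr
        have := (abs_le.1 (hbd r hr.le)).1
        linarith
    have e1 : 0 ≤ s r0 + κ * exp ((-(2 * k)) * r0) := by
      have t : Tendsto (fun r => s r + κ * exp ((-(2 * k)) * r)) atTop (𝓝 (0 + κ * 0)) :=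
        hs0.add (hle.const_mul κ)
      rw [mul_zero, add_zero] at t
      apply le_of_tendsto t
      filter_upwards [eventually_ge_atTop r0] with r hr
      exact hA (show r0 ≤ r0 from le_rfl) (show r0 ≤ r from hr) hr
    have e2 : s r0 - κ * exp ((-(2 * k)) * r0) ≤ 0 := by
      have t : Tendsto (fun r => s r - κ * exp ((-(2 * k)) * r)) atTop (𝓝 (0 - κ * 0)) :=
        hs0.sub (hle.const_mul κ)
      rw [mul_zero, sub_zero] at t
      apply ge_of_tendsto t
      filter_upwards [eventually_ge_atTop r0] with r hr
      exact hB (show r0 ≤ r0 from le_rfl) (show r0 ≤ r from hr) hr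
    rw [abs_le]
    constructor <;> linarith
  have hq : Tendsto (fun r => exp (k * r) * (y1 r + k * y r)) atTop (𝓝 0) := by
    have t : Tendsto (fun r : ℝ => c' / (2 * k * r ^ 2)) atTop (𝓝 0) := by
      apply tendsto_const_nhds.div_atTop
      exact (tendsto_pow_atTop two_ne_zero).const_mul_atTop (by positivity)
    apply squeeze_zero_norm' _ t
    filter_upwards [eventually_ge_atTop R'] with r hr
    have e : exp (k * r) * (y1 r + k * y r) = exp (2 * k * r) * s r := by
      simp only [s]; rw [← mul_assoc, ← exp_add]; ring_nf
    rw [e, Real.norm_eq_abs, abs_mul, abs_of_pos (exp_pos _)]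
    calc exp (2 * k * r) * |s r| ≤ exp (2 * k * r) * (c' / (2 * k * r ^ 2) * exp ((-(2 * k)) * r)) := by
          gcongr; exact hsb r hr
      _ = (exp (2 * k * r) * exp ((-(2 * k)) * r)) * (c' / (2 * k * r ^ 2)) := by ring
      _ = _ := by rw [← exp_add]; simp
  refine ⟨(0 - L) / (2 * k), ?_, ?_⟩
  · refine ((hq.sub hL).div_const (2 * k)).congr fun r => ?_
    simp only [M]
    field_simp
    ring
  · have := (hq.add hL).div_const 2
    have e : -k * ((0 - L) / (2 * k)) = (0 + L) / 2 := by field_simp; ring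
    rw [e]
    refine this.congr fun r => ?_
    simp only [M]
    ring

end TT

namespace TT
open Set Topology

lemma sinh_sub_le {s : ℝ} (hs : |s| ≤ 1) : |sinh s - s| ≤ s ^ 2 := by
  have h1 := Real.abs_exp_sub_one_sub_id_le hs
  have h2 := Real.abs_exp_sub_one_sub_id_le (x := -s) (by rwa [abs_neg])
  rw [abs_le] at h1 h2 ⊢
  rw [sinh_eq]
  constructor <;> nlinarith

lemma cosh_sub_le {s : ℝ} (hs : |s| ≤ 1) : cosh s - 1 ≤ s ^ 2 := by
  have h1 := Real.abs_exp_sub_one_sub_id_le hs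
  have h2 := Real.abs_exp_sub_one_sub_id_le (x := -s) (by rwa [abs_neg])
  rw [abs_le] at h1 h2
  rw [cosh_eq]
  nlinarith

lemma inv_sq_exp {r : ℝ} (hr : 0 < r) : exp (-r) ≤ 2 / r ^ 2 := by
  have := Real.quadratic_le_exp_of_nonneg hr.le
  rw [exp_neg, inv_eq_one_div, div_le_div_iff₀ (exp_pos _) (by positivity)]
  nlinarith

lemma mul_sinh_ge (s : ℝ) : s ^ 2 ≤ s * sinh s := by
  rcases le_total 0 s with h | h
  · nlinarith [Real.self_le_sinh_iff.2 h]
  · nlinarith [Real.sinh_le_self_iff.2 h]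

lemma sqrt_liouville {u u1 u2 : ℝ → ℝ} (hu : ∀ r > 0, HasDerivAt u (u1 r) r)
    (hu1 : ∀ r > 0, HasDerivAt u1 (u2 r) r) (r : ℝ) (hr : 0 < r) :
    HasDerivAt (fun r => sqrt r * u r) (sqrt r * u1 r + u r / (2 * sqrt r)) r ∧
    HasDerivAt (fun r => sqrt r * u1 r + u r / (2 * sqrt r))
      (sqrt r * (u2 r + u1 r / r) - sqrt r * u r / (4 * r ^ 2)) r := by
  have hs := hasDerivAt_sqrt hr.ne'
  have s0 : 0 < sqrt r := sqrt_pos.2 hr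
  have ss : sqrt r ^ 2 = r := sq_sqrt hr.le
  constructor
  · refine ((hs.mul (hu r hr)).congr_deriv ?_)
    field_simp
    ring
  · refine ((hs.mul (hu1 r hr)).add ((hu r hr).div (hs.const_mul 2) (by positivity))).congr_deriv ?_
    generalize sqrt r = q at *
    subst ss
    field_simp
    ring

lemma asymp_back {u u1 : ℝ → ℝ} {k A : ℝ}
    (h1 : Tendsto (fun r => exp (k * r) * (sqrt r * u r)) atTop (𝓝 A))
    (h2 : Tendsto (fun r => exp (k * r) * (sqrt r * u1 r + u r / (2 * sqrt r))) atTop (𝓝 (-k * A))) :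
    Tendsto (fun r => sqrt r * exp (k * r) * u r) atTop (𝓝 A) ∧
    Tendsto (fun r => sqrt r * exp (k * r) * u1 r) atTop (𝓝 (-k * A)) := by
  constructor
  · refine h1.congr fun r => by ring
  · have h3 : Tendsto (fun r : ℝ => r⁻¹ * (1/2)) atTop (𝓝 (0 * (1/2))) := tendsto_inv_atTop_zero.mul_const _
    have h4 := h2.sub (h1.mul h3)
    simp only [zero_mul, mul_zero, sub_zero] at h4
    refine h4.congr' ?_
    filter_upwards [eventually_gt_atTop 0] with r hr
    have s0 : 0 < sqrt r := sqrt_pos.2 hr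
    have ss : sqrt r ^ 2 = r := sq_sqrt hr.le
    generalize exp (k * r) = E
    generalize u r = a
    generalize u1 r = b
    generalize sqrt r = q at *
    subst ss
    field_simp
    ring

set_option maxHeartbeats 2000000 in
lemma asymp_inf {u u1 u2 v v1 v2 : ℝ → ℝ}
    (hu : ∀ r > 0, HasDerivAt u (u1 r) r) (hu1 : ∀ r > 0, HasDerivAt u1 (u2 r) r)
    (hv : ∀ r > 0, HasDerivAt v (v1 r) r) (hv1 : ∀ r > 0, HasDerivAt v1 (v2 r) r)
    (eu : ∀ r > 0, u2 r + u1 r / r = 4 * exp (2 * v r) * sinh (2 * u r))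
    (ev : ∀ r > 0, v2 r + v1 r / r = 8 * sinh (2 * v r) + 4 * exp (2 * v r) * (cosh (2 * u r) - 1))
    (lu : Tendsto u atTop (𝓝 0)) (lv : Tendsto v atTop (𝓝 0)) :
    ∃ A B, Tendsto (fun r => sqrt r * exp (2 * sqrt 2 * r) * u r) atTop (𝓝 A) ∧
      Tendsto (fun r => sqrt r * exp (2 * sqrt 2 * r) * u1 r) atTop (𝓝 (-(2 * sqrt 2) * A)) ∧
      Tendsto (fun r => sqrt r * exp (4 * r) * v r) atTop (𝓝 B) ∧
      Tendsto (fun r => sqrt r * exp (4 * r) * v1 r) atTop (𝓝 (-4 * B)) := by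
  obtain ⟨R, hR1, hRs⟩ : ∃ R ≥ (1:ℝ), ∀ r ≥ R, |u r| ≤ 1/100 ∧ |v r| ≤ 1/100 := by
    have e1 : ∀ᶠ r in atTop, |u r| < 1/100 := by
      have := lu.abs; rw [abs_zero] at this
      exact this.eventually_lt_const (by norm_num)
    have e2 : ∀ᶠ r in atTop, |v r| < 1/100 := by
      have := lv.abs; rw [abs_zero] at this
      exact this.eventually_lt_const (by norm_num)
    obtain ⟨R, hR⟩ := eventually_atTop.1 ((e1.and e2))
    exact ⟨max R 1, le_max_right _ _, fun r hr =>
      ⟨(hR r ((le_max_left _ _).trans hr)).1.le, (hR r ((le_max_left _ _).trans hr)).2.le⟩⟩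
  have hR0 : 0 < R := by linarith
  have hexp : ∀ r ≥ R, |exp (2 * v r) - 1| ≤ 4 * |v r| := by
    intro r hr
    have := Real.abs_exp_sub_one_le (x := 2 * v r) (by
      rw [abs_mul, abs_two]; linarith [(hRs r hr).2])
    rw [abs_mul, abs_two] at this; linarith
  -- first decay
  obtain ⟨C, hC⟩ : ∃ C, ∀ r ≥ R, (u r) ^ 2 + (v r) ^ 2 ≤ C * exp (-(3 * r)) := by
    apply z_decay (κ := 3) (z1 := fun r => 2 * u r * u1 r + 2 * v r * v1 r)
      (z2 := fun r => 2 * u1 r * u1 r + 2 * u r * u2 r + (2 * v1 r * v1 r + 2 * v r * v2 r)) hR0 (by norm_num)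
    · intro r hr
      have hr0 : 0 < r := by linarith
      refine (((hu r hr0).pow 2).add ((hv r hr0).pow 2)).congr_deriv ?_
      push_cast; ring
    · intro r hr
      have hr0 : 0 < r := by linarith
      exact ((((hu r hr0).const_mul 2).mul (hu1 r hr0)).add (((hv r hr0).const_mul 2).mul (hv1 r hr0)))
    · intro r hr; positivity
    · intro r hr
      have hr0 : 0 < r := by linarith
      have e1 := eu r hr0
      have e2 := ev r hr0
      have key : 2 * u1 r * u1 r + 2 * u r * u2 r + (2 * v1 r * v1 r + 2 * v r * v2 r)
          + (2 * u r * u1 r + 2 * v r * v1 r) / r = 2 * (u1 r ^ 2 + v1 r ^ 2)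
          + 2 * u r * (u2 r + u1 r / r) + 2 * v r * (v2 r + v1 r / r) := by ring
      rw [key, e1, e2]
      obtain ⟨b1, b2⟩ := hRs r hr
      have b3 := hexp r hr
      have m1 := mul_sinh_ge (2 * u r)
      have m2 := mul_sinh_ge (2 * v r)
      have m3 := cosh_sub_le (s := 2 * u r) (by rw [abs_mul, abs_two]; linarith)
      have m4 := one_le_cosh (2 * u r)
      have b4 : |exp (2 * v r) - 1| ≤ 1/25 := by linarith
      rw [abs_le] at b4 b2
      set E := exp (2 * v r)
      have p1 : 8 * (24/25) * (2 * u r ^ 2) ≤ 2 * u r * (4 * E * sinh (2 * u r)) := by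
        nlinarith [mul_nonneg (sub_nonneg.2 m1) (show 0 ≤ E by linarith), sq_nonneg (u r)]
      have p2 : E * (cosh (2 * u r) - 1) ≤ (26/25) * (4 * u r ^ 2) := by
        nlinarith [mul_nonneg (show (0:ℝ) ≤ 26/25 - E by linarith) (show 0 ≤ cosh (2 * u r) - 1 by linarith)]
      have p3 : - (u r ^ 2) ≤ 2 * v r * (4 * E * (cosh (2 * u r) - 1)) := by
        have q : 0 ≤ E * (cosh (2 * u r) - 1) := mul_nonneg (by linarith) (by linarith)
        nlinarith [mul_nonneg (show (0:ℝ) ≤ 1/100 + v r by linarith) q, sq_nonneg (u r)]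
      nlinarith [sq_nonneg (u1 r), sq_nonneg (v1 r), sq_nonneg (u r), sq_nonneg (v r)]
    · simpa using (lu.pow 2).add (lv.pow 2)
  have hC0 : 0 ≤ C := by
    have := hC R le_rfl
    by_contra hneg
    push Not at hneg
    nlinarith [exp_pos (-(3 * R)), sq_nonneg (u R), sq_nonneg (v R)]
  have hroot : ∀ r ≥ R, |u r| ≤ sqrt C * exp (-(3/2 * r)) ∧ |v r| ≤ sqrt C * exp (-(3/2*r)) := by
    intro r hr
    have e : C * exp (-(3 * r)) = (sqrt C * exp (-(3/2 * r)))^2 := by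
      rw [mul_pow, sq_sqrt hC0, ← exp_nat_mul]; push_cast; ring_nf
    have h := hC r hr
    rw [e] at h
    constructor
    · refine abs_le_of_sq_le_sq ?_ (by positivity)
      nlinarith [sq_nonneg (v r)]
    · refine abs_le_of_sq_le_sq ?_ (by positivity)
      nlinarith [sq_nonneg (u r)]
  have hroot2 : ∀ r ≥ R, |u r| ≤ 2 * sqrt C / r ^ 2 ∧ |v r| ≤ 2 * sqrt C / r ^ 2 := by
    intro r hr
    have hr0 : 0 < r := by linarith
    have h1 : exp (-(3/2 * r)) ≤ 2 / r ^ 2 := (exp_le_exp.2 (by linarith)).trans (inv_sq_exp hr0)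
    have h2 : sqrt C * exp (-(3/2 * r)) ≤ sqrt C * (2 / r^2) := by gcongr
    have h3 : sqrt C * (2 / r^2) = 2 * sqrt C / r ^ 2 := by ring
    exact ⟨by linarith [(hroot r hr).1], by linarith [(hroot r hr).2]⟩
  have hsq0 : ∀ r ≥ R, ∀ y, |y| ≤ 2 * sqrt C / r ^ 2 → |sqrt r * y| ≤ 2 * sqrt C / r := by
    intro r hr y hy
    have hr0 : 0 < r := by linarith
    rw [abs_mul, abs_of_nonneg (sqrt_nonneg _)]
    have : sqrt r ≤ r := by rw [sqrt_le_left hr0.le]; nlinarith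
    calc sqrt r * |y| ≤ r * (2 * sqrt C / r ^ 2) := by gcongr
      _ = _ := by field_simp
  have hto0 : ∀ y : ℝ → ℝ, (∀ r ≥ R, |y r| ≤ 2 * sqrt C / r ^ 2) →
      Tendsto (fun r => sqrt r * y r) atTop (𝓝 0) := by
    intro y hy
    have : Tendsto (fun r : ℝ => 2 * sqrt C / r) atTop (𝓝 0) := tendsto_const_nhds.div_atTop tendsto_id
    refine squeeze_zero_norm' ?_ this
    filter_upwards [eventually_ge_atTop R] with r hr
    exact hsq0 r hr _ (hy r hr)
  have hsmall : ∀ r ≥ R, |u r| ≤ 1/2 ∧ |v r| ≤ 1/2 := fun r hr =>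
    ⟨by linarith [(hRs r hr).1], by linarith [(hRs r hr).2]⟩
  -- u
  obtain ⟨A, hA1, hA2⟩ := decay_asymp (y := fun r => sqrt r * u r)
    (y1 := fun r => sqrt r * u1 r + u r / (2 * sqrt r))
    (y2 := fun r => sqrt r * (u2 r + u1 r / r) - sqrt r * u r / (4 * r ^ 2))
    (R := R) (k := 2 * sqrt 2) (c := 160 * sqrt C + 1) hR0 (by positivity) (by positivity)
    (fun r hr => (sqrt_liouville hu hu1 r (by linarith)).1)
    (fun r hr => (sqrt_liouville hu hu1 r (by linarith)).2) (by
      intro r hr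
      have hr0 : 0 < r := by linarith
      have hk : (2 * sqrt 2)^2 = 8 := by rw [mul_pow, sq_sqrt (by norm_num)]; norm_num
      simp only [hk]
      rw [eu r hr0]
      have e : sqrt r * (4 * exp (2 * v r) * sinh (2 * u r)) - sqrt r * u r / (4 * r ^ 2) - 8 * (sqrt r * u r)
        = sqrt r * (4 * (exp (2 * v r) - 1) * sinh (2 * u r) + 4 * (sinh (2 * u r) - 2 * u r))
          - (1 / (4 * r^2)) * (sqrt r * u r) := by ring
      rw [e]
      have h1 := sinh_sub_le (s := 2 * u r) (by rw [abs_mul, abs_two]; linarith [(hsmall r hr).1])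
      have h2 : |sinh (2 * u r)| ≤ 4 * |u r| := by
        have := abs_le.1 h1
        have h3 : (2 * u r)^2 ≤ 2 * |u r| := by
          have := (hsmall r hr).1
          rw [mul_pow, ← sq_abs (u r)]; nlinarith [abs_nonneg (u r)]
        have := abs_add_le (sinh (2 * u r) - 2 * u r) (2 * u r)
        rw [sub_add_cancel, abs_mul, abs_two] at this
        linarith
      have h3 : |4 * (exp (2 * v r) - 1) * sinh (2 * u r) + 4 * (sinh (2 * u r) - 2 * u r)|
          ≤ (160 * sqrt C / r^2) * |u r| := by
        have a1 := hexp r hr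
        have a2 := hroot2 r hr
        calc _ ≤ |4 * (exp (2 * v r) - 1) * sinh (2 * u r)| + |4 * (sinh (2 * u r) - 2 * u r)| := abs_add_le _ _
          _ = 4 * |exp (2 * v r) - 1| * |sinh (2 * u r)| + 4 * |sinh (2 * u r) - 2 * u r| := by
            rw [abs_mul, abs_mul, abs_mul]; norm_num
          _ ≤ 4 * (4 * |v r|) * (4 * |u r|) + 4 * (2 * u r)^2 := by gcongr
          _ = (64 * |v r| + 16 * |u r|) * |u r| := by rw [mul_pow, ← sq_abs (u r)]; ring
          _ ≤ (64 * (2 * sqrt C / r^2) + 16 * (2 * sqrt C / r^2)) * |u r| := by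
            gcongr
            exacts [a2.2, a2.1]
          _ = _ := by ring
      have h4 : |sqrt r * (4 * (exp (2 * v r) - 1) * sinh (2 * u r) + 4 * (sinh (2 * u r) - 2 * u r))|
          ≤ (160 * sqrt C / r^2) * |sqrt r * u r| := by
        rw [abs_mul, abs_mul, abs_of_nonneg (sqrt_nonneg r)]
        nlinarith [sqrt_nonneg r]
      have h5 : |(1 / (4 * r^2)) * (sqrt r * u r)| ≤ 1 / r^2 * |sqrt r * u r| := by
        rw [abs_mul, abs_of_nonneg (by positivity)]
        gcongr
        nlinarith
      have h6 : 0 ≤ (160 * sqrt C + 1) * exp (-(2 * sqrt 2 * r)) / r ^ 2 := by positivity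
      calc _ ≤ _ := abs_sub _ _
        _ ≤ (160 * sqrt C / r^2) * |sqrt r * u r| + 1 / r^2 * |sqrt r * u r| := add_le_add h4 h5
        _ = (160 * sqrt C + 1) / r ^ 2 * |sqrt r * u r| := by ring
        _ ≤ _ := by linarith)
    (hto0 u fun r hr => (hroot2 r hr).1)
  obtain ⟨hA3, hA4⟩ := asymp_back hA1 hA2
  -- bound on u
  obtain ⟨R2, M, hR2, hM0, hM⟩ : ∃ R2 M : ℝ, R ≤ R2 ∧ 0 ≤ M ∧ ∀ r ≥ R2, sqrt r * exp (2 * sqrt 2 * r) * |u r| ≤ M := by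
    have := hA3.abs
    have e := this.eventually_lt_const (lt_add_one |A|)
    obtain ⟨R2, h⟩ := eventually_atTop.1 e
    refine ⟨max R R2, |A| + 1, le_max_left _ _, by positivity, fun r hr => ?_⟩
    have := h r ((le_max_right _ _).trans hr)
    rw [abs_mul, abs_of_nonneg (by positivity)] at this
    exact this.le
  obtain ⟨B, hB1, hB2⟩ := decay_asymp (y := fun r => sqrt r * v r)
    (y1 := fun r => sqrt r * v1 r + v r / (2 * sqrt r))
    (y2 := fun r => sqrt r * (v2 r + v1 r / r) - sqrt r * v r / (4 * r ^ 2))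
    (R := R2) (k := 4) (c := 64 * sqrt C + 1 + 64 * M^2) (by linarith) (by positivity) (by positivity)
    (fun r hr => (sqrt_liouville hv hv1 r (by linarith)).1)
    (fun r hr => (sqrt_liouville hv hv1 r (by linarith)).2) (by
      intro r hr
      have hrR : r ≥ R := by linarith
      have hr0 : 0 < r := by linarith
      rw [ev r hr0]
      have e : sqrt r * (8 * sinh (2 * v r) + 4 * exp (2 * v r) * (cosh (2 * u r) - 1))
          - sqrt r * v r / (4 * r ^ 2) - 4 ^ 2 * (sqrt r * v r)
        = sqrt r * (8 * (sinh (2 * v r) - 2 * v r)) - (1 / (4 * r^2)) * (sqrt r * v r)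
          + sqrt r * (4 * exp (2 * v r) * (cosh (2 * u r) - 1)) := by ring
      rw [e]
      have h1 := sinh_sub_le (s := 2 * v r) (by rw [abs_mul, abs_two]; linarith [(hsmall r hrR).2])
      have h4 : |sqrt r * (8 * (sinh (2 * v r) - 2 * v r))|
          ≤ (64 * sqrt C / r^2) * |sqrt r * v r| := by
        rw [abs_mul, abs_mul, abs_mul, abs_of_nonneg (sqrt_nonneg r)]
        have a2 := hroot2 r hrR
        have : |(8:ℝ)| * |sinh (2 * v r) - 2 * v r| ≤ 64 * sqrt C / r^2 * |v r| := by
          rw [abs_of_nonneg (by norm_num : (0:ℝ) ≤ 8)]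
          calc _ ≤ 8 * (2 * v r)^2 := by gcongr
            _ = 32 * |v r| * |v r| := by rw [mul_pow, ← sq_abs (v r)]; ring
            _ ≤ 32 * (2 * sqrt C / r ^ 2) * |v r| := by gcongr; exact a2.2
            _ = _ := by ring
        nlinarith [sqrt_nonneg r]
      have h5 : |(1 / (4 * r^2)) * (sqrt r * v r)| ≤ 1 / r^2 * |sqrt r * v r| := by
        rw [abs_mul, abs_of_nonneg (by positivity)]
        gcongr
        nlinarith
      have h7 : |sqrt r * (4 * exp (2 * v r) * (cosh (2 * u r) - 1))| ≤ 64 * M^2 * exp (-(4 * r)) / r ^ 2 := by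
        have m3 := cosh_sub_le (s := 2 * u r) (by rw [abs_mul, abs_two]; linarith [(hsmall r hrR).1])
        have m4 := one_le_cosh (2 * u r)
        have m5 : exp (2 * v r) ≤ 2 := by
          have := (abs_le.1 (hexp r hrR)).2
          linarith [(hRs r hrR).2]
        rw [abs_of_nonneg (mul_nonneg (sqrt_nonneg _) (mul_nonneg (by positivity) (by linarith)))]
        have hm := hM r hr
        have hq : sqrt r * |u r| ≤ M * exp (-(2 * sqrt 2 * r)) := by
          rw [exp_neg, ← div_eq_mul_inv, le_div_iff₀ (exp_pos _)]; linarith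
        have hs2 : (11:ℝ)/8 ≤ sqrt 2 := by
          rw [le_sqrt (by norm_num) (by norm_num)]; norm_num
        have hs1 : 1 ≤ sqrt r := by rw [one_le_sqrt]; linarith
        have hx : exp (-(2 * sqrt 2 * r)) ^ 2 ≤ exp (-(4 * r)) * exp (-r) := by
          rw [← exp_nat_mul, ← exp_add]
          apply exp_le_exp.2
          push_cast
          nlinarith
        have hi := inv_sq_exp hr0
        calc sqrt r * (4 * exp (2 * v r) * (cosh (2 * u r) - 1))
            ≤ sqrt r * (4 * 2 * (2 * u r)^2) := by
              gcongr
          _ = 32 * (sqrt r * |u r|^2) := by rw [mul_pow, ← sq_abs (u r)]; ring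
          _ ≤ 32 * (sqrt r * |u r|)^2 := by
              rw [mul_pow]; nlinarith [mul_nonneg (mul_nonneg (sqrt_nonneg r) (sub_nonneg.2 hs1)) (sq_nonneg |u r|)]
          _ ≤ 32 * (M * exp (-(2 * sqrt 2 * r)))^2 := by gcongr
          _ = 32 * M^2 * exp (-(2 * sqrt 2 * r))^2 := by ring
          _ ≤ 32 * M^2 * (exp (-(4 * r)) * (2 / r^2)) := by
              gcongr
              exact hx.trans (by gcongr)
          _ = _ := by ring
      have h8 : 64 * M^2 * exp (-(4 * r)) / r ^ 2 ≤ (64 * sqrt C + 1 + 64 * M ^ 2) * exp (-(4 * r)) / r ^ 2 := by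
        gcongr
        have := sqrt_nonneg C
        linarith
      have h9 : (64 * sqrt C + 1) / r ^ 2 * |sqrt r * v r| ≤ (64 * sqrt C + 1 + 64 * M ^ 2) / r ^ 2 * |sqrt r * v r| := by
        refine mul_le_mul_of_nonneg_right (div_le_div_of_nonneg_right ?_ (by positivity)) (abs_nonneg _)
        nlinarith [sq_nonneg M]
      calc _ ≤ _ := (abs_add_le _ _).trans (add_le_add (abs_sub _ _) le_rfl)
        _ ≤ (64 * sqrt C / r^2) * |sqrt r * v r| + 1 / r^2 * |sqrt r * v r| + 64 * M^2 * exp (-(4 * r)) / r ^ 2 :=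
            add_le_add (add_le_add h4 h5) h7
        _ = (64 * sqrt C + 1) / r ^ 2 * |sqrt r * v r| + 64 * M^2 * exp (-(4 * r)) / r ^ 2 := by ring
        _ ≤ _ := by linarith)
    (hto0 v fun r hr => (hroot2 r hr).2)
  obtain ⟨hB3, hB4⟩ := asymp_back hB1 hB2
  exact ⟨A, B, hA3, hA4, hB3, hB4⟩
end TT

namespace TT
open Set Topology

lemma pow_bound {f : ℝ → ℝ} {γ : ℝ} (hγ : -1 < γ)
    (h : Tendsto (fun r => f r / log r) (𝓝[>] 0) (𝓝 γ)) :
    ∃ δ : ℝ, 0 < δ ∧ ∀ᶠ r in 𝓝[>] (0:ℝ), r * exp (f r) ≤ r ^ δ := by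
  refine ⟨(γ + 1)/2, by linarith, ?_⟩
  have h1 := h.eventually_const_lt (show (γ-1)/2 < γ by linarith)
  have h2 : ∀ᶠ r in 𝓝[>] (0:ℝ), r ∈ Ioo (0:ℝ) 1 := Ioo_mem_nhdsGT one_pos
  filter_upwards [h1, h2] with r hr1 hr2
  have hl : log r < 0 := log_neg hr2.1 hr2.2
  rw [lt_div_iff_of_neg hl] at hr1
  rw [rpow_def_of_pos hr2.1]
  nth_rewrite 1 [← exp_log hr2.1]
  rw [← exp_add]
  apply exp_le_exp.2
  nlinarith

lemma near0 {w d g : ℝ → ℝ} {γ δ C : ℝ} (hw : ∀ r > 0, HasDerivAt w (d r) r)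
    (hP : ∀ r > 0, HasDerivAt (fun r => r * d r) (g r) r) (hδ : 0 < δ)
    (hg : ∀ᶠ r in 𝓝[>] (0:ℝ), |g r| * r ≤ C * r ^ δ)
    (hγ : Tendsto (fun r => 2 * w r / log r) (𝓝[>] 0) (𝓝 γ)) :
    Tendsto (fun r => r * d r) (𝓝[>] 0) (𝓝 (γ/2)) := by
  have hE : Tendsto (fun s : ℝ => exp (-s)) atTop (𝓝[>] 0) :=
    tendsto_nhdsWithin_iff.2 ⟨tendsto_exp_neg_atTop_nhds_zero, Eventually.of_forall fun s => exp_pos _⟩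
  have hed : ∀ s : ℝ, HasDerivAt (fun s : ℝ => exp (-s)) (-exp (-s)) s := by
    intro s
    simpa using (hasDerivAt_neg s).exp
  have hM : ∀ s : ℝ, HasDerivAt (fun s => exp (-s) * d (exp (-s))) (g (exp (-s)) * -exp (-s)) s := by
    intro s
    exact (hP _ (exp_pos (-s))).comp s (hed s)
  have hW : ∀ s : ℝ, HasDerivAt (fun s => w (exp (-s))) (d (exp (-s)) * -exp (-s)) s := by
    intro s
    exact (hw _ (exp_pos (-s))).comp s (hed s)
  obtain ⟨R, hR⟩ := eventually_atTop.1 (hE.eventually hg)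
  obtain ⟨L, hL⟩ := conv_of_deriv (R := max R 1) (c := 2 * |C| / δ^2) (lt_of_lt_of_le one_pos (le_max_right _ _))
    (fun s _ => hM s) (by
      intro s hs
      have h1 := hR s ((le_max_left _ _).trans hs)
      have s0 : 0 < s := lt_of_lt_of_le one_pos ((le_max_right _ _).trans hs)
      rw [abs_mul, abs_neg, abs_of_pos (exp_pos _)]
      refine h1.trans ?_
      rw [← exp_mul]
      have h2 := inv_sq_exp (r := δ * s) (by positivity)
      have h3 : -s * δ = -(δ * s) := by ring
      rw [h3]
      calc C * exp (-(δ * s)) ≤ |C| * (2 / (δ * s)^2) := by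
            apply mul_le_mul (le_abs_self C) h2 (exp_pos _).le (abs_nonneg _)
        _ = _ := by field_simp)
  have hγ2 : Tendsto (fun s => w (exp (-s)) / s) atTop (𝓝 (-γ/2)) := by
    have := ((hγ.comp hE).mul_const (-1/2))
    refine (this.congr' ?_).trans (by rw [show γ * (-1/2) = -γ/2 by ring])
    filter_upwards [eventually_gt_atTop 0] with s hs
    simp only [Function.comp, log_exp]
    field_simp
  have h2s : Tendsto (fun s : ℝ => 2 * s) atTop atTop := tendsto_id.const_mul_atTop (by norm_num)
  have hdiff : Tendsto (fun s => (w (exp (-(2 * s))) - w (exp (-s))) / s) atTop (𝓝 (-γ/2)) := by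
    have := ((hγ2.comp h2s).const_mul 2).sub hγ2
    refine (this.congr' ?_).trans (by rw [show 2 * (-γ/2) - (-γ/2) = -γ/2 by ring])
    filter_upwards [eventually_gt_atTop 0] with s hs
    simp only [Function.comp]
    field_simp
  have hxi : ∀ s : ℝ, ∃ ξ ≥ s, 0 < s → (w (exp (-(2 * s))) - w (exp (-s))) / s = -(exp (-ξ) * d (exp (-ξ))) := by
    intro s
    by_cases hs : 0 < s
    · obtain ⟨ξ, hξ, e⟩ := exists_hasDerivAt_eq_slope (fun s => w (exp (-s))) (fun s => d (exp (-s)) * -exp (-s))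
        (show s < 2 * s by linarith) (fun t _ => (hW t).continuousAt.continuousWithinAt) (fun t _ => hW t)
      refine ⟨ξ, hξ.1.le, fun _ => ?_⟩
      rw [show 2 * s - s = s by ring] at e
      rw [← e]; ring
    · exact ⟨s, le_rfl, fun h => absurd h hs⟩
  choose ξ hξ1 hξ2 using hxi
  have hξ : Tendsto ξ atTop atTop := tendsto_atTop_mono hξ1 tendsto_id
  have h3 : Tendsto (fun s => (w (exp (-(2 * s))) - w (exp (-s))) / s) atTop (𝓝 (-L)) := by
    refine ((hL.comp hξ).neg).congr' ?_
    filter_upwards [eventually_gt_atTop 0] with s hs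
    rw [hξ2 s hs]; rfl
  have hLγ : L = γ/2 := by
    have := tendsto_nhds_unique h3 hdiff
    linarith
  rw [hLγ] at hL
  have hlog : Tendsto (fun r : ℝ => - log r) (𝓝[>] 0) atTop :=
    tendsto_neg_atBot_atTop.comp tendsto_log_nhdsGT_zero
  refine (hL.comp hlog).congr' ?_
  filter_upwards [self_mem_nhdsWithin] with r hr
  simp only [Function.comp, neg_neg, exp_log (show 0 < r from hr)]

/-- package of data for the ODE -/
structure Sol (w0 w1 d0 d1 : ℝ → ℝ) : Prop where
  h0 : ∀ r > 0, HasDerivAt w0 (d0 r) r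
  h1 : ∀ r > 0, HasDerivAt w1 (d1 r) r
  k0 : ∀ r > 0, HasDerivAt (fun r => r * d0 r)
    (2 * r * (exp (4 * w0 r) - exp (2 * w1 r - 2 * w0 r))) r
  k1 : ∀ r > 0, HasDerivAt (fun r => r * d1 r)
    (2 * r * (exp (2 * w1 r - 2 * w0 r) - exp (-(4 * w1 r)))) r

lemma zero_asymp {w0 w1 d0 d1 : ℝ → ℝ} (H : Sol w0 w1 d0 d1) {γ0 γ1 : ℝ}
    (hγ0 : -1 < γ0) (hγ1 : γ1 < 1) (hγ : γ1 > γ0 - 2)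
    (l0 : Tendsto (fun r => 2 * w0 r / log r) (𝓝[>] 0) (𝓝 γ0))
    (l1 : Tendsto (fun r => 2 * w1 r / log r) (𝓝[>] 0) (𝓝 γ1)) :
    Tendsto (fun r => r * d0 r) (𝓝[>] 0) (𝓝 (γ0/2)) ∧
    Tendsto (fun r => r * d1 r) (𝓝[>] 0) (𝓝 (γ1/2)) ∧
    Tendsto (fun r => r * exp (w1 r - w0 r)) (𝓝[>] 0) (𝓝 0) ∧
    Tendsto (fun r => r * exp (-(2 * w1 r))) (𝓝[>] 0) (𝓝 0) ∧
    Tendsto (fun r => r * exp (2 * w0 r)) (𝓝[>] 0) (𝓝 0) := by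
  have lb : Tendsto (fun r => (w1 r - w0 r) / log r) (𝓝[>] 0) (𝓝 ((γ1 - γ0)/2)) := by
    refine ((l1.sub l0).div_const 2).congr fun r => by ring
  have lc : Tendsto (fun r => (-(2 * w1 r)) / log r) (𝓝[>] 0) (𝓝 (-γ1)) := by
    refine l1.neg.congr fun r => by ring
  obtain ⟨δa, pa, ha⟩ := pow_bound hγ0 l0
  obtain ⟨δb, pb, hb⟩ := pow_bound (by linarith) lb
  obtain ⟨δc, pc, hc⟩ := pow_bound (by linarith) lc
  set δ := min δa (min δb δc) with hδd
  have hδ : 0 < δ := lt_min pa (lt_min pb pc)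
  have h2 : ∀ᶠ r in 𝓝[>] (0:ℝ), r ∈ Ioo (0:ℝ) 1 := Ioo_mem_nhdsGT one_pos
  have ha' : ∀ᶠ r in 𝓝[>] (0:ℝ), r * exp (2 * w0 r) ≤ r ^ δ := by
    filter_upwards [ha, h2] with r h h2
    exact h.trans (rpow_le_rpow_of_exponent_ge h2.1 h2.2.le (min_le_left _ _))
  have hb' : ∀ᶠ r in 𝓝[>] (0:ℝ), r * exp (w1 r - w0 r) ≤ r ^ δ := by
    filter_upwards [hb, h2] with r h h2
    exact h.trans (rpow_le_rpow_of_exponent_ge h2.1 h2.2.le ((min_le_right _ _).trans (min_le_left _ _)))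
  have hc' : ∀ᶠ r in 𝓝[>] (0:ℝ), r * exp (-(2 * w1 r)) ≤ r ^ δ := by
    filter_upwards [hc, h2] with r h h2
    exact h.trans (rpow_le_rpow_of_exponent_ge h2.1 h2.2.le ((min_le_right _ _).trans (min_le_right _ _)))
  have hlim : Tendsto (fun r : ℝ => r ^ δ) (𝓝[>] 0) (𝓝 0) := by
    have := (continuousAt_rpow_const 0 δ (Or.inr hδ.le)).tendsto
    rw [zero_rpow hδ.ne'] at this
    exact this.mono_left nhdsWithin_le_nhds
  have sq : ∀ f : ℝ → ℝ, (∀ᶠ r in 𝓝[>] (0:ℝ), r * exp (f r) ≤ r ^ δ) →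
      Tendsto (fun r => r * exp (f r)) (𝓝[>] 0) (𝓝 0) := by
    intro f hf
    refine squeeze_zero' ?_ hf hlim
    filter_upwards [h2] with r hr
    exact mul_nonneg hr.1.le (exp_pos _).le
  have key : ∀ (X Y r : ℝ), 0 < r → r < 1 → r * exp X ≤ r ^ δ → r * exp Y ≤ r ^ δ →
      |2 * r * (exp (2 * X) - exp (2 * Y))| * r ≤ 4 * r ^ δ := by
    intro X Y r r0 r1 hX hY
    have e : ∀ X, exp (2 * X) = exp X * exp X := fun X => by rw [← exp_add]; ring_nf
    have hle : r ^ δ ≤ 1 := rpow_le_one r0.le r1.le hδ.le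
    have h1 : |2 * r * (exp (2 * X) - exp (2 * Y))| * r
        = 2 * |(r * exp X) * (r * exp X) - (r * exp Y) * (r * exp Y)| := by
      nth_rewrite 2 [← abs_of_pos r0]
      rw [← abs_mul]
      rw [← abs_two, ← abs_mul, abs_two, e, e]
      congr 1; ring
    rw [h1]
    have p1 : 0 < r * exp X := by positivity
    have p2 : 0 < r * exp Y := by positivity
    have q1 : (r * exp X) * (r * exp X) ≤ r ^ δ := by nlinarith
    have q2 : (r * exp Y) * (r * exp Y) ≤ r ^ δ := by nlinarith
    have : |(r * exp X) * (r * exp X) - (r * exp Y) * (r * exp Y)| ≤ r ^ δ := by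
      rw [abs_le]; constructor <;> nlinarith
    have := rpow_pos_of_pos r0 δ
    linarith
  refine ⟨near0 (C := 4) H.h0 H.k0 hδ ?_ l0, near0 (C := 4) H.h1 H.k1 hδ ?_ l1, sq _ hb', sq _ hc', sq _ ha'⟩
  · filter_upwards [ha', hb', h2] with r ha hb h2
    have := key _ _ r h2.1 h2.2 ha hb
    rwa [show 2 * (2 * w0 r) = 4 * w0 r by ring, show 2 * (w1 r - w0 r) = 2 * w1 r - 2 * w0 r by ring] at this
  · filter_upwards [hb', hc', h2] with r hb hc h2
    have := key _ _ r h2.1 h2.2 hb hc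
    rwa [show 2 * (-(2 * w1 r)) = -(4 * w1 r) by ring, show 2 * (w1 r - w0 r) = 2 * w1 r - 2 * w0 r by ring] at this

end TT

namespace TT
open Set Topology
attribute [local instance] Matrix.linftyOpNormedRing Matrix.linftyOpNormedAlgebra

abbrev Mat := Matrix (Fin 4) (Fin 4) ℝ

lemma mat_hasDerivAt {f : ℝ → Mat} {f' : Mat} {t : ℝ}
    (h : ∀ i j, HasDerivAt (fun t => f t i j) (f' i j) t) : HasDerivAt f f' t := by
  have h1 : HasDerivAt (fun t => ∑ i, ∑ j, f t i j • (Matrix.single i j (1:ℝ) : Mat))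
      (∑ i, ∑ j, f' i j • (Matrix.single i j (1:ℝ) : Mat)) t := by
    apply HasDerivAt.fun_sum; intro i _
    apply HasDerivAt.fun_sum; intro j _
    exact (h i j).smul_const _
  have e : ∀ M : Mat, ∑ i, ∑ j, M i j • (Matrix.single i j (1:ℝ) : Mat) = M := by
    intro M
    conv_rhs => rw [Matrix.matrix_eq_sum_single M]
    simp [Matrix.smul_single]
  simpa only [e] using h1

lemma mat_hasDerivAt_elem {f : ℝ → Mat} {f' : Mat} {t : ℝ} (h : HasDerivAt f f' t) (i j : Fin 4) :
    HasDerivAt (fun t => f t i j) (f' i j) t := by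
  have := ((LinearMap.toContinuousLinearMap (Matrix.entryLinearMap ℝ ℝ i j : Mat →ₗ[ℝ] ℝ)).hasFDerivAt
    (x := f t)).comp_hasDerivAt t h
  exact this

lemma elem_le_norm (M : Mat) (i j : Fin 4) : |M i j| ≤ ‖M‖ := by
  rw [Matrix.linfty_opNorm_def]
  have h1 : (∑ j, ‖M i j‖₊) ≤ (Finset.univ : Finset (Fin 4)).sup fun i => ∑ j, ‖M i j‖₊ :=
    Finset.le_sup (f := fun i => ∑ j, ‖M i j‖₊) (Finset.mem_univ i)
  have h2 : ‖M i j‖₊ ≤ ∑ j, ‖M i j‖₊ := Finset.single_le_sum (f := fun j => ‖M i j‖₊) (fun _ _ => zero_le) (Finset.mem_univ j)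
  have := h2.trans h1
  have h3 : ((‖M i j‖₊ : NNReal) : ℝ) = |M i j| := by simp
  rw [← h3]
  exact_mod_cast this

lemma norm_le_of_elem {M : Mat} {ε : ℝ} (h : ∀ i j, |M i j| ≤ ε) : ‖M‖ ≤ 4 * ε := by
  have hε : 0 ≤ ε := (abs_nonneg _).trans (h 0 0)
  rw [Matrix.linfty_opNorm_def]
  have : ((Finset.univ : Finset (Fin 4)).sup fun i => ∑ j, ‖M i j‖₊) ≤ (⟨4 * ε, by positivity⟩ : NNReal) := by
    apply Finset.sup_le
    intro i _
    refine NNReal.coe_le_coe.1 ?_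
    rw [NNReal.coe_sum]
    simp only [coe_nnnorm, NNReal.coe_mk]
    calc ∑ j, ‖M i j‖ ≤ ∑ j : Fin 4, ε := Finset.sum_le_sum fun j _ => by rw [Real.norm_eq_abs]; exact h i j
      _ = 4 * ε := by simp
  exact_mod_cast this

/-- the θ-connection: arguments p0 = x d0, p1 = x d1, b_i = x a_i -/
noncomputable def Am (p0 p1 b0 b1 b3 c s : ℝ) : Mat :=
  !![-b3 * s, -p0 - b3 * c, -b0 * s, -b0 * c;
     p0 - b3 * c, b3 * s, b0 * c, -b0 * s;
     -b0 * s, b0 * c, -b1 * s, -p1 + b1 * c;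
     -b0 * c, -b0 * s, p1 + b1 * c, b1 * s]

noncomputable def Bm (a0 a1 a3 c s : ℝ) : Mat :=
  !![a3 * c, -a3 * s, a0 * c, -a0 * s;
     -a3 * s, -a3 * c, a0 * s, a0 * c;
     a0 * c, a0 * s, a1 * c, a1 * s;
     -a0 * s, a0 * c, a1 * s, -a1 * c]

noncomputable def Dm : Mat :=
  !![cos (π/4), -sin (π/4), 0, 0; sin (π/4), cos (π/4), 0, 0;
     0, 0, cos (3*π/4), -sin (3*π/4); 0, 0, sin (3*π/4), cos (3*π/4)]

lemma c34 : cos (3*π/4) = -(sqrt 2/2) := by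
  rw [show 3*π/4 = π - π/4 by ring, cos_pi_sub, cos_pi_div_four]
lemma s34 : sin (3*π/4) = sqrt 2/2 := by
  rw [show 3*π/4 = π - π/4 by ring, sin_pi_sub, sin_pi_div_four]

lemma D_rel (a0 a1 a3 c s : ℝ) : Dm * Bm a0 a1 a3 (-s) c = Bm a0 a1 a3 c s * Dm := by
  unfold Dm Bm
  rw [c34, s34, cos_pi_div_four, sin_pi_div_four]
  ext i j
  fin_cases i <;> fin_cases j <;> simp [Matrix.mul_apply, Fin.sum_univ_four] <;> ring

set_option maxHeartbeats 1600000 in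
lemma zero_curv_aux (x d0 d1 a0 a1 a3 c s : ℝ) :
    Am (2*x*(a3^2-a0^2)*(c^2+s^2)) (2*x*(a0^2-a1^2)*(c^2+s^2)) (a0 + x*((d1-d0)*a0)) (a1 + x*(-2*d1*a1)) (a3 + x*(2*d0*a3)) c s
      = Bm a0 a1 a3 (-s) c + Bm a0 a1 a3 c s * Am (x*d0) (x*d1) (x*a0) (x*a1) (x*a3) c s
        - Am (x*d0) (x*d1) (x*a0) (x*a1) (x*a3) c s * Bm a0 a1 a3 c s := by
  unfold Am Bm
  ext i j
  fin_cases i <;> fin_cases j <;> simp [Matrix.mul_apply, Fin.sum_univ_four] <;> ring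

lemma zero_curv (x d0 d1 a0 a1 a3 c s : ℝ) (hcs : c ^ 2 + s ^ 2 = 1) :
    Am (2*x*(a3^2-a0^2)) (2*x*(a0^2-a1^2)) (a0 + x*((d1-d0)*a0)) (a1 + x*(-2*d1*a1)) (a3 + x*(2*d0*a3)) c s
      = Bm a0 a1 a3 (-s) c + Bm a0 a1 a3 c s * Am (x*d0) (x*d1) (x*a0) (x*a1) (x*a3) c s
        - Am (x*d0) (x*d1) (x*a0) (x*a1) (x*a3) c s * Bm a0 a1 a3 c s := by
  rw [← zero_curv_aux, hcs, mul_one, mul_one]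
end TT

namespace TT
open Set Topology
attribute [local instance] Matrix.linftyOpNormedRing Matrix.linftyOpNormedAlgebra

lemma Am_sub (p0 p1 b0 b1 b3 q0 q1 e0 e1 e3 c s : ℝ) :
    Am p0 p1 b0 b1 b3 c s - Am q0 q1 e0 e1 e3 c s = Am (p0-q0) (p1-q1) (b0-e0) (b1-e1) (b3-e3) c s := by
  unfold Am
  ext i j
  fin_cases i <;> fin_cases j <;> simp <;> ring

lemma Am_smul (h p0 p1 b0 b1 b3 c s : ℝ) :
    h • Am p0 p1 b0 b1 b3 c s = Am (h*p0) (h*p1) (h*b0) (h*b1) (h*b3) c s := by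
  unfold Am
  ext i j
  fin_cases i <;> fin_cases j <;> simp <;> ring

lemma mul_bd {y c : ℝ} (hc : |c| ≤ 1) : |y * c| ≤ |y| := by
  rw [abs_mul]; nlinarith [abs_nonneg y]

lemma Am_norm (p0 p1 b0 b1 b3 : ℝ) {c s : ℝ} (hc : |c| ≤ 1) (hs : |s| ≤ 1) :
    ‖Am p0 p1 b0 b1 b3 c s‖ ≤ 4 * (|p0| + |p1| + |b0| + |b1| + |b3|) := by
  apply norm_le_of_elem
  have c0 := abs_le.1 (mul_bd (y := b0) hc)
  have c1 := abs_le.1 (mul_bd (y := b1) hc)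
  have c3 := abs_le.1 (mul_bd (y := b3) hc)
  have s0 := abs_le.1 (mul_bd (y := b0) hs)
  have s1 := abs_le.1 (mul_bd (y := b1) hs)
  have s3 := abs_le.1 (mul_bd (y := b3) hs)
  have n0 := abs_nonneg p0
  have n1 := abs_nonneg p1
  have m0 := abs_nonneg b0
  have m1 := abs_nonneg b1
  have m3 := abs_nonneg b3
  have k0 := abs_le.1 (le_refl |p0|)
  have k1 := abs_le.1 (le_refl |p1|)
  intro i j
  unfold Am
  rw [abs_le]
  fin_cases i <;> fin_cases j <;> simp <;> constructor <;> linarith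

noncomputable def Ax (w0 w1 d0 d1 : ℝ → ℝ) (x t : ℝ) : Mat :=
  Am (x * d0 x) (x * d1 x) (x * exp (w1 x - w0 x)) (x * exp (-(2 * w1 x))) (x * exp (2 * w0 x)) (cos t) (sin t)

lemma Am_cont (p0 p1 b0 b1 b3 : ℝ) : Continuous fun t => Am p0 p1 b0 b1 b3 (cos t) (sin t) := by
  apply continuous_matrix
  intro i j
  unfold Am
  fin_cases i <;> fin_cases j <;> simp <;> fun_prop

noncomputable def Tm (w0 w1 d0 d1 : ℝ → ℝ) (x : ℝ) : Mat :=
  Dm * trans (Ax w0 w1 d0 d1 x) (-(π/8)) (3*π/8)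

lemma Bm_deriv (a0 a1 a3 t : ℝ) :
    HasDerivAt (fun t => Bm a0 a1 a3 (cos t) (sin t)) (Bm a0 a1 a3 (-sin t) (cos t)) t := by
  apply mat_hasDerivAt
  intro i j
  have hc := hasDerivAt_cos t
  have hs := hasDerivAt_sin t
  have c0 := hc.const_mul a0
  have c1 := hc.const_mul a1
  have c3 := hc.const_mul a3
  have s0 := hs.const_mul a0
  have s1 := hs.const_mul a1
  have s3 := hs.const_mul a3
  have c1' := hc.const_mul (-a1)
  have c3' := hc.const_mul (-a3)
  have s0' := hs.const_mul (-a0)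
  have s3' := hs.const_mul (-a3)
  unfold Bm
  fin_cases i <;> fin_cases j
  exacts [c3, s3', c0, s0', s3', c3', s0, c0, c0, s0, c1, s1, s0', c0, s1, c1']

lemma lin_approx {f : ℝ → ℝ} {f' x : ℝ} (h : HasDerivAt f f' x) {ε : ℝ} (hε : 0 < ε) :
    ∀ᶠ k in 𝓝 (0:ℝ), |f (x + k) - f x - k * f'| ≤ ε * |k| := by
  have := (hasDerivAt_iff_isLittleO_nhds_zero.1 h).def hε
  simpa using this

lemma Tm_deriv {w0 w1 d0 d1 : ℝ → ℝ} (H : Sol w0 w1 d0 d1) {x : ℝ} (hx : 0 < x) :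
    ∃ B : Mat, HasDerivAt (Tm w0 w1 d0 d1) (B * Tm w0 w1 d0 d1 x - Tm w0 w1 d0 d1 x * B) x := by
  set a0 := exp (w1 x - w0 x) with ha0
  set a1 := exp (-(2 * w1 x)) with ha1
  set a3 := exp (2 * w0 x) with ha3
  have e0 : HasDerivAt (fun x => x * exp (w1 x - w0 x)) (a0 + x * ((d1 x - d0 x) * a0)) x := by
    refine ((hasDerivAt_id x).mul (((H.h1 x hx).sub (H.h0 x hx)).exp)).congr_deriv ?_
    simp only [id, Pi.sub_apply, ha0]; ring
  have e1 : HasDerivAt (fun x => x * exp (-(2 * w1 x))) (a1 + x * (-2 * d1 x * a1)) x := by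
    refine ((hasDerivAt_id x).mul ((((H.h1 x hx).const_mul 2).neg).exp)).congr_deriv ?_
    simp only [id, Pi.neg_apply, ha1]; ring
  have e3 : HasDerivAt (fun x => x * exp (2 * w0 x)) (a3 + x * (2 * d0 x * a3)) x := by
    refine ((hasDerivAt_id x).mul ((((H.h0 x hx).const_mul 2)).exp)).congr_deriv ?_
    simp only [id, Pi.sub_apply, ha3]; ring
  have q0 : a0^2 = exp (2 * w1 x - 2 * w0 x) := by
    rw [ha0, ← exp_nat_mul]; push_cast; ring_nf
  have q1 : a1^2 = exp (-(4 * w1 x)) := by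
    rw [ha1, ← exp_nat_mul]; push_cast; ring_nf
  have q3 : a3^2 = exp (4 * w0 x) := by
    rw [ha3, ← exp_nat_mul]; push_cast; ring_nf
  have f0 := H.k0 x hx
  have f1 := H.k1 x hx
  rw [← q0, ← q3] at f0
  rw [← q0, ← q1] at f1
  have hb : (3*π/8 : ℝ) = -(π/8) + π/2 := by ring
  refine ⟨_, hol_deriv (Ax w0 w1 d0 d1) (a := -(π/8)) (b := 3*π/8) (x := x) (by linarith [pi_pos])
    (fun y => Am_cont _ _ _ _ _) (fun t => Bm a0 a1 a3 (cos t) (sin t))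
    (fun t => Bm a0 a1 a3 (-sin t) (cos t))
    (fun t => Am (2*x*(a3^2-a0^2)) (2*x*(a0^2-a1^2)) (a0 + x*((d1 x-d0 x)*a0)) (a1 + x*(-2*d1 x*a1))
      (a3 + x*(2*d0 x*a3)) (cos t) (sin t)) Dm (Bm_deriv a0 a1 a3) (Am_cont _ _ _ _ _) ?_ ?_ ?_⟩
  · intro ε hε
    have hε' : 0 < ε / 20 := by positivity
    filter_upwards [lin_approx e0 hε', lin_approx e1 hε', lin_approx e3 hε', lin_approx f0 hε', lin_approx f1 hε']
      with k g0 g1 g3 h0 h1 t _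
    rw [Am_smul]
    unfold Ax
    rw [Am_sub, Am_sub]
    refine (Am_norm _ _ _ _ _ (abs_cos_le_one t) (abs_sin_le_one t)).trans ?_
    linarith
  · intro t
    exact zero_curv x (d0 x) (d1 x) a0 a1 a3 (cos t) (sin t) (cos_sq_add_sin_sq t)
  · rw [hb, cos_add_pi_div_two, sin_add_pi_div_two]
    exact D_rel _ _ _ _ _

lemma trace_deriv {f : ℝ → Mat} {f' : Mat} {t : ℝ} (h : HasDerivAt f f' t) :
    HasDerivAt (fun t => (f t).trace) f'.trace t := by
  unfold Matrix.trace
  apply HasDerivAt.fun_sum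
  intro i _
  exact mat_hasDerivAt_elem h i i

lemma tr_const {w0 w1 d0 d1 : ℝ → ℝ} (H : Sol w0 w1 d0 d1) :
    ∃ τ1 τ2, ∀ x > 0, (Tm w0 w1 d0 d1 x).trace = τ1 ∧ (Tm w0 w1 d0 d1 x * Tm w0 w1 d0 d1 x).trace = τ2 := by
  have h1 : ∀ x ∈ Ioi (0:ℝ), HasDerivAt (fun x => (Tm w0 w1 d0 d1 x).trace) 0 x := by
    intro x hx
    obtain ⟨B, hB⟩ := Tm_deriv H hx
    refine (trace_deriv hB).congr_deriv ?_
    rw [Matrix.trace_sub, Matrix.trace_mul_comm, sub_self]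
  have h2 : ∀ x ∈ Ioi (0:ℝ), HasDerivAt (fun x => (Tm w0 w1 d0 d1 x * Tm w0 w1 d0 d1 x).trace) 0 x := by
    intro x hx
    obtain ⟨B, hB⟩ := Tm_deriv H hx
    refine (trace_deriv (hB.mul hB)).congr_deriv ?_
    generalize Tm w0 w1 d0 d1 x = T
    have : (B * T - T * B) * T + T * (B * T - T * B) = B * (T * T) - (T * T) * B := by noncomm_ring
    rw [this, Matrix.trace_sub, Matrix.trace_mul_comm, sub_self]
  have key : ∀ f : ℝ → ℝ, (∀ x ∈ Ioi (0:ℝ), HasDerivAt f 0 x) → ∀ x > 0, f x = f 1 := by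
    intro f hf x hx
    exact isOpen_Ioi.is_const_of_deriv_eq_zero isPreconnected_Ioi
      (fun y hy => (hf y hy).differentiableAt.differentiableWithinAt)
      (fun y hy => (hf y hy).deriv) hx (show (0:ℝ) < 1 from one_pos)
  exact ⟨_, _, fun x hx => ⟨key _ h1 x hx, key _ h2 x hx⟩⟩

noncomputable def Rm (α β : ℝ) : Mat :=
  !![cos α, -sin α, 0, 0; sin α, cos α, 0, 0; 0, 0, cos β, -sin β; 0, 0, sin β, cos β]

lemma Rm_norm (α β : ℝ) : ‖Rm α β‖ ≤ 4 := by
  have : ‖Rm α β‖ ≤ 4 * 1 := by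
    apply norm_le_of_elem
    intro i j
    unfold Rm
    fin_cases i <;> fin_cases j <;> simp [abs_cos_le_one, abs_sin_le_one]
  linarith

lemma Rm_deriv (p q a t : ℝ) : HasDerivAt (fun t => Rm (p * (t - a)) (q * (t - a)))
    (Am p q 0 0 0 (cos t) (sin t) * Rm (p * (t - a)) (q * (t - a))) t := by
  have h : ∀ p : ℝ, HasDerivAt (fun t => p * (t - a)) p t := fun p => by
    simpa using ((hasDerivAt_id t).sub_const a).const_mul p
  have hc := fun p => (h p).cos
  have hs := fun p => (h p).sin
  have hz := hasDerivAt_const t (0:ℝ)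
  have e : Am p q 0 0 0 (cos t) (sin t) * Rm (p * (t - a)) (q * (t - a)) =
    !![-sin (p * (t-a)) * p, -(cos (p * (t-a)) * p), 0, 0; cos (p * (t-a)) * p, -sin (p * (t-a)) * p, 0, 0;
      0, 0, -sin (q * (t-a)) * q, -(cos (q * (t-a)) * q); 0, 0, cos (q * (t-a)) * q, -sin (q * (t-a)) * q] := by
    unfold Am Rm
    ext i j
    fin_cases i <;> fin_cases j <;> simp [Matrix.mul_apply, Fin.sum_univ_four] <;> ring
  rw [e]
  apply mat_hasDerivAt
  intro i j
  unfold Rm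
  fin_cases i <;> fin_cases j
  exacts [hc p, (hs p).neg, hz, hz, hs p, hc p, hz, hz, hz, hz, hc q, (hs q).neg, hz, hz, hs q, hc q]

lemma Rm_mul (α β γ δ : ℝ) : Rm α β * Rm γ δ = Rm (α + γ) (β + δ) := by
  unfold Rm
  simp only [cos_add, sin_add]
  ext i j
  fin_cases i <;> fin_cases j <;> simp [Matrix.mul_apply, Fin.sum_univ_four] <;> ring

lemma T_zero {w0 w1 d0 d1 : ℝ → ℝ} {γ0 γ1 : ℝ}
    (h0 : Tendsto (fun r => r * d0 r) (𝓝[>] 0) (𝓝 (γ0/2)))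
    (h1 : Tendsto (fun r => r * d1 r) (𝓝[>] 0) (𝓝 (γ1/2)))
    (h2 : Tendsto (fun r => r * exp (w1 r - w0 r)) (𝓝[>] 0) (𝓝 0))
    (h3 : Tendsto (fun r => r * exp (-(2 * w1 r))) (𝓝[>] 0) (𝓝 0))
    (h4 : Tendsto (fun r => r * exp (2 * w0 r)) (𝓝[>] 0) (𝓝 0)) :
    Tendsto (Tm w0 w1 d0 d1) (𝓝[>] 0) (𝓝 (Rm (π * (γ0 + 1) / 4) (π * (γ1 + 3) / 4))) := by
  set E : ℝ → ℝ := fun r => |γ0/2 - r * d0 r| + |γ1/2 - r * d1 r| + |0 - r * exp (w1 r - w0 r)|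
    + |0 - r * exp (-(2 * w1 r))| + |0 - r * exp (2 * w0 r)| with hE
  have hE0 : Tendsto E (𝓝[>] 0) (𝓝 0) := by
    have := (((((h0.const_sub (γ0/2)).abs).add ((h1.const_sub (γ1/2)).abs)).add ((h2.const_sub 0).abs)).add
      ((h3.const_sub 0).abs)).add ((h4.const_sub 0).abs)
    simp only [sub_self, abs_zero, add_zero] at this
    exact this
  have hEn : ∀ r, 0 ≤ E r := fun r => by positivity
  have hab : -(π/8) ≤ 3*π/8 := by linarith [pi_pos]
  set N := 4 * (|γ0/2| + |γ1/2| + |(0:ℝ)| + |(0:ℝ)| + |(0:ℝ)|) with hN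
  have hdiff : ∀ r t, ‖Am (γ0/2) (γ1/2) 0 0 0 (cos t) (sin t) - Ax w0 w1 d0 d1 r t‖ ≤ 4 * E r := by
    intro r t
    unfold Ax
    rw [Am_sub]
    exact Am_norm _ _ _ _ _ (abs_cos_le_one t) (abs_sin_le_one t)
  have hbd : ∀ r t, ‖Ax w0 w1 d0 d1 r t‖ ≤ N + 4 * E r := by
    intro r t
    have h1 := Am_norm (γ0/2) (γ1/2) 0 0 0 (abs_cos_le_one t) (abs_sin_le_one t)
    have h2 := norm_sub_norm_le (Ax w0 w1 d0 d1 r t) (Am (γ0/2) (γ1/2) 0 0 0 (cos t) (sin t))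
    rw [norm_sub_rev] at h2
    linarith [hdiff r t]
  have hmain : ∀ r, ‖Rm (γ0/2 * (3*π/8 - -(π/8))) (γ1/2 * (3*π/8 - -(π/8)))
      - trans (Ax w0 w1 d0 d1 r) (-(π/8)) (3*π/8) * 1‖
      ≤ (4 * E r * 4) * (3*π/8 - -(π/8)) * exp ((N + 4 * E r) * (3*π/8 - -(π/8))) := by
    intro r
    have := trans_close (Ax w0 w1 d0 d1 r) (Am_cont _ _ _ _ _) hab
      (Ψ := fun t => Rm (γ0/2 * (t - -(π/8))) (γ1/2 * (t - -(π/8))))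
      (fun t _ => (Rm_deriv _ _ _ t).continuousAt.continuousWithinAt)
      (fun t _ => (Rm_deriv _ _ _ t).hasDerivWithinAt) (K := N + 4 * E r) (ε := 4 * E r * 4)
      (by have := hEn r; positivity) (by have := hEn r; positivity) (fun t _ => hbd r t) (by
        intro t _
        rw [← sub_mul]
        refine (norm_mul_le _ _).trans ?_
        have := hEn r
        exact mul_le_mul (hdiff r t) (Rm_norm _ _) (norm_nonneg _) (by positivity))
    have e1 : Rm (γ0/2 * (-(π/8) - -(π/8))) (γ1/2 * (-(π/8) - -(π/8))) = 1 := by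
      rw [sub_self, mul_zero, mul_zero]
      unfold Rm
      ext i j
      fin_cases i <;> fin_cases j <;> simp
    rwa [e1] at this
  have hlim : Tendsto (fun r => (4 * E r * 4) * (3*π/8 - -(π/8)) * exp ((N + 4 * E r) * (3*π/8 - -(π/8))))
      (𝓝[>] 0) (𝓝 0) := by
    have a1 := ((hE0.const_mul 4).mul_const 4).mul_const (3*π/8 - -(π/8))
    have a2 := (((hE0.const_mul 4).const_add N).mul_const (3*π/8 - -(π/8))).rexp
    simpa using a1.mul a2
  have ht : Tendsto (fun r => trans (Ax w0 w1 d0 d1 r) (-(π/8)) (3*π/8)) (𝓝[>] 0)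
      (𝓝 (Rm (γ0/2 * (3*π/8 - -(π/8))) (γ1/2 * (3*π/8 - -(π/8))))) := by
    refine tendsto_iff_norm_sub_tendsto_zero.2 ?_
    refine squeeze_zero (fun _ => norm_nonneg _) (fun r => ?_) hlim
    have := hmain r
    rwa [mul_one, norm_sub_rev] at this
  have := ht.const_mul Dm
  have e2 : Dm * Rm (γ0/2 * (3*π/8 - -(π/8))) (γ1/2 * (3*π/8 - -(π/8)))
      = Rm (π * (γ0 + 1) / 4) (π * (γ1 + 3) / 4) := by
    have : Dm = Rm (π/4) (3*π/4) := rfl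
    rw [this, Rm_mul]
    congr 1 <;> ring
  rw [e2] at this
  exact this

lemma tr_zero {w0 w1 d0 d1 : ℝ → ℝ} (H : Sol w0 w1 d0 d1) {γ0 γ1 : ℝ}
    (hγ0 : -1 < γ0) (hγ1 : γ1 < 1) (hγ : γ1 > γ0 - 2)
    (l0 : Tendsto (fun r => 2 * w0 r / log r) (𝓝[>] 0) (𝓝 γ0))
    (l1 : Tendsto (fun r => 2 * w1 r / log r) (𝓝[>] 0) (𝓝 γ1)) (x : ℝ) (hx : 0 < x) :
    (Tm w0 w1 d0 d1 x).trace = 2 * cos (π * (γ0 + 1) / 4) + 2 * cos (π * (γ1 + 3) / 4) ∧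
    (Tm w0 w1 d0 d1 x * Tm w0 w1 d0 d1 x).trace
      = 4 * cos (π * (γ0 + 1) / 4) ^ 2 + 4 * cos (π * (γ1 + 3) / 4) ^ 2 - 4 := by
  obtain ⟨τ1, τ2, hτ⟩ := tr_const H
  obtain ⟨z1, z2, z3, z4, z5⟩ := zero_asymp H hγ0 hγ1 hγ l0 l1
  have hT := T_zero z1 z2 z3 z4 z5
  have ctr : Continuous (fun M : Mat => M.trace) := continuous_id.matrix_trace
  have t1 := (ctr.tendsto _).comp hT
  have t2 := (ctr.tendsto _).comp (hT.mul hT)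
  have u1 : Tendsto ((fun M : Mat => M.trace) ∘ Tm w0 w1 d0 d1) (𝓝[>] 0) (𝓝 τ1) := by
    refine tendsto_const_nhds.congr' ?_
    filter_upwards [self_mem_nhdsWithin] with r hr using (hτ r hr).1.symm
  have u2 : Tendsto ((fun M : Mat => M.trace) ∘ fun x => Tm w0 w1 d0 d1 x * Tm w0 w1 d0 d1 x) (𝓝[>] 0) (𝓝 τ2) := by
    refine tendsto_const_nhds.congr' ?_
    filter_upwards [self_mem_nhdsWithin] with r hr using (hτ r hr).2.symm
  rw [(hτ x hx).1, (hτ x hx).2, tendsto_nhds_unique u1 t1, tendsto_nhds_unique u2 t2]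
  constructor
  · simp [Rm, Matrix.trace, Fin.sum_univ_four]; ring
  · rw [Rm_mul, ← two_mul, ← two_mul]
    simp only [Rm, Matrix.trace, Fin.sum_univ_four]
    simp [cos_two_mul]; ring
end TT

namespace TT
open Set Topology

lemma cos_scale (y : ℝ) : Tendsto (fun x : ℝ => x * (cos (y / sqrt x) - 1)) atTop (𝓝 (-(y^2/2))) := by
  have hlim : Tendsto (fun x : ℝ => y^4 * (5/96) / x) atTop (𝓝 0) := tendsto_const_nhds.div_atTop tendsto_id
  rw [tendsto_iff_norm_sub_tendsto_zero]
  refine squeeze_zero' (Eventually.of_forall fun _ => norm_nonneg _) ?_ hlim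
  filter_upwards [eventually_gt_atTop 0, eventually_ge_atTop (y^2)] with x hx hxy
  have q0 : 0 < sqrt x := sqrt_pos.2 hx
  have qq : sqrt x ^ 2 = x := sq_sqrt hx.le
  have h1 : |y / sqrt x| ≤ 1 := by
    rw [abs_div, abs_of_pos q0, div_le_one q0]
    exact abs_le_sqrt hxy
  have h2 := cos_bound h1
  have e : x * (cos (y / sqrt x) - 1) - -(y^2/2) = x * (cos (y / sqrt x) - (1 - (y / sqrt x)^2/2)) := by
    rw [div_pow, qq]; field_simp; ring
  rw [e, Real.norm_eq_abs, abs_mul, abs_of_pos hx]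
  have h4 : |y / sqrt x|^4 = y^4 / x^2 := by
    rw [← abs_pow, div_pow, abs_of_nonneg (by positivity), show sqrt x ^ 4 = (sqrt x ^2)^2 by ring, qq]
  rw [h4] at h2
  calc _ ≤ x * (y^4/x^2 * (5/96)) := by gcongr
    _ = _ := by field_simp

lemma laplace {m a b : ℝ} (hm : 0 < m) (ha : a < 0) (hb : 0 < b) (ha' : -π ≤ a) (hb' : b ≤ π)
    (f : ℝ → ℝ) (hf : Continuous f) :
    Tendsto (fun x => sqrt x * ∫ τ in a..b, exp (m * x * (cos τ - 1)) * f τ) atTop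
      (𝓝 (f 0 * sqrt (2 * π / m))) := by
  obtain ⟨M, hM⟩ := isCompact_Icc.exists_bound_of_continuousOn (s := Icc (-π) π) hf.continuousOn
  have hM0 : 0 ≤ M := (norm_nonneg _).trans (hM 0 ⟨by linarith [pi_pos], pi_pos.le⟩)
  set g : ℝ → ℝ → ℝ := fun x y => exp (m * x * (cos (y / sqrt x) - 1)) * f (y / sqrt x) with hg
  have hgc : ∀ x, Continuous (g x) := by intro x; simp only [hg]; fun_prop
  have gaussLim : Tendsto (fun x => ∫ y, (Ioc (sqrt x * a) (sqrt x * b)).indicator (g x) y) atTop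
      (𝓝 (∫ y, exp (-(m/2) * y^2) * f 0)) := by
    apply MeasureTheory.tendsto_integral_filter_of_dominated_convergence (fun y => M * exp (-(m * (2/π^2)) * y^2))
    · exact Eventually.of_forall fun x =>
        ((hgc x).measurable.indicator measurableSet_Ioc).aestronglyMeasurable
    · filter_upwards [eventually_gt_atTop 0] with x hx
      refine Eventually.of_forall fun y => ?_
      have q0 : 0 < sqrt x := sqrt_pos.2 hx
      have qq : sqrt x ^ 2 = x := sq_sqrt hx.le
      by_cases hy : y ∈ Ioc (sqrt x * a) (sqrt x * b)
      · rw [indicator_of_mem hy]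
        have z1 : a ≤ y / sqrt x := by rw [le_div_iff₀ q0]; linarith [hy.1]
        have z2 : y / sqrt x ≤ b := by rw [div_le_iff₀ q0]; linarith [hy.2]
        have z3 : |y / sqrt x| ≤ π := abs_le.2 ⟨by linarith, by linarith⟩
        have h1 := cos_le_one_sub_mul_cos_sq z3
        have h2 := hM (y / sqrt x) (abs_le.1 z3)
        simp only [hg]
        rw [norm_mul, Real.norm_eq_abs, abs_of_pos (exp_pos _), mul_comm]
        refine mul_le_mul h2 (exp_le_exp.2 ?_) (exp_pos _).le hM0
        have e : -(m * (2/π^2)) * y^2 = m * x * (-(2/π^2 * (y / sqrt x)^2)) := by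
          rw [div_pow, qq]; field_simp
        rw [e]
        apply mul_le_mul_of_nonneg_left _ (by positivity)
        linarith
      · rw [indicator_of_notMem hy, norm_zero]; positivity
    · exact (integrable_exp_neg_mul_sq (by positivity)).const_mul M
    · refine Eventually.of_forall fun y => ?_
      have hs : Tendsto (fun x : ℝ => sqrt x) atTop atTop := tendsto_sqrt_atTop
      have h1 := (hs.atTop_mul_const_of_neg ha).eventually_lt_atBot y
      have h2 := (hs.atTop_mul_const hb).eventually_ge_atTop y
      have h3 : Tendsto (fun x => g x y) atTop (𝓝 (exp (-(m/2) * y^2) * f 0)) := by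
        have h4 : Tendsto (fun x : ℝ => y / sqrt x) atTop (𝓝 0) := tendsto_const_nhds.div_atTop hs
        have h5 := (hf.tendsto 0).comp h4
        have h6 := ((cos_scale y).const_mul m).rexp
        refine (h6.mul h5).congr (fun x => ?_) |>.trans ?_
        · simp only [hg, Function.comp]; ring_nf
        · apply le_of_eq; ring_nf
      refine h3.congr' ?_
      filter_upwards [h1, h2] with x k1 k2
      rw [indicator_of_mem (show y ∈ Ioc (sqrt x * a) (sqrt x * b) from ⟨k1, k2⟩)]
  have hval : ∫ y, exp (-(m/2) * y^2) * f 0 = f 0 * sqrt (2 * π / m) := by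
    rw [MeasureTheory.integral_mul_const, integral_gaussian, mul_comm]
    congr 2; field_simp
  rw [hval] at gaussLim
  refine gaussLim.congr' ?_
  filter_upwards [eventually_gt_atTop 0] with x hx
  have q0 : 0 < sqrt x := sqrt_pos.2 hx
  rw [MeasureTheory.integral_indicator measurableSet_Ioc,
    ← intervalIntegral.integral_of_le (by nlinarith)]
  have := intervalIntegral.integral_comp_div (a := sqrt x * a) (b := sqrt x * b) (fun τ => exp (m * x * (cos τ - 1)) * f τ) q0.ne'
  rw [smul_eq_mul, mul_div_cancel_left₀ _ q0.ne', mul_div_cancel_left₀ _ q0.ne'] at this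
  exact this

lemma laplace_shift {m a b t0 : ℝ} (hm : 0 < m) (ha : a < t0) (hb : t0 < b) (ha' : -π ≤ a - t0) (hb' : b - t0 ≤ π)
    {α β : ℝ → ℝ} {α0 β0 : ℝ} (hα : Tendsto α atTop (𝓝 α0)) (hβ : Tendsto β atTop (𝓝 β0)) :
    Tendsto (fun x => ∫ t in a..b, sqrt x * exp (m * x * (cos (t - t0) - 1)) * (α x + β x * cos (t - t0))) atTop
      (𝓝 ((α0 + β0) * sqrt (2 * π / m))) := by
  have h1 := laplace hm (sub_neg.2 ha) (sub_pos.2 hb) ha' hb' (fun _ => 1) continuous_const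
  have h2 := laplace hm (sub_neg.2 ha) (sub_pos.2 hb) ha' hb' cos continuous_cos
  have := (hα.mul h1).add (hβ.mul h2)
  rw [cos_zero, ← add_mul, one_mul] at this
  refine this.congr fun x => ?_
  rw [intervalIntegral.integral_comp_sub_right (fun t => sqrt x * exp (m * x * (cos t - 1)) * (α x + β x * cos t)) t0]
  rw [← intervalIntegral.integral_const_mul, ← intervalIntegral.integral_const_mul,
    ← intervalIntegral.integral_const_mul, ← intervalIntegral.integral_const_mul, ← intervalIntegral.integral_add]
  · congr 1; ext t; ring
  · apply Continuous.intervalIntegrable; fun_prop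
  · apply Continuous.intervalIntegrable; fun_prop
end TT

namespace TT
open Set Topology
attribute [local instance] Matrix.linftyOpNormedRing Matrix.linftyOpNormedAlgebra

/-- transpose of the diagonalizing orthogonal matrix, h = √2/2 -/
noncomputable def St (h : ℝ) : Mat :=
  !![h, 0, h, 0; 1/2, 1/2, -1/2, 1/2; 0, h, 0, -h; -1/2, 1/2, 1/2, 1/2]

noncomputable def Dh : Mat := !![0, 0, 0, -1; 1, 0, 0, 0; 0, 1, 0, 0; 0, 0, 1, 0]

lemma St_mul {h : ℝ} (hh : h ^ 2 = 1/2) : St h * (St h).transpose = 1 := by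
  unfold St
  ext i j
  fin_cases i <;> fin_cases j <;> simp [Matrix.mul_apply, Fin.sum_univ_four] <;> nlinarith

lemma half_sq : (sqrt 2 / 2) ^ 2 = (1/2 : ℝ) := by
  rw [div_pow, sq_sqrt (by norm_num)]; norm_num

lemma St_Dm : St (sqrt 2 / 2) * Dm = Dh * St (sqrt 2 / 2) := by
  have hh := half_sq
  unfold Dm
  rw [c34, s34, cos_pi_div_four, sin_pi_div_four]
  generalize sqrt 2 / 2 = h at hh ⊢
  unfold St Dh
  ext i j
  fin_cases i <;> fin_cases j <;> simp [Matrix.mul_apply, Fin.sum_univ_four] <;> nlinarith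

/-- the rotated connection matrix -/
noncomputable def Mm (h P Q V b0 b2 c s : ℝ) : Mat :=
  !![-(2*s*b0), -(P - h*(-s-c)*Q), -(V - 2*c*b2), -(P - h*(s-c)*Q);
     P - h*(c+s)*Q, -(2*c*b0), -(P - h*(-c+s)*Q), -(V + 2*s*b2);
     V + 2*c*b2, P - h*(-s+c)*Q, 2*s*b0, -(P - h*(s+c)*Q);
     P - h*(c-s)*Q, V - 2*s*b2, P - h*(-c-s)*Q, 2*c*b0]

lemma St_Am {h : ℝ} (hh : h ^ 2 = 1/2) (p0 p1 b0 b1 b3 c s : ℝ) :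
    St h * Am p0 p1 b0 b1 b3 c s =
      Mm h (h/2*(p0+p1)) ((b3-b1)/2) ((p0-p1)/2) ((2*b0+b1+b3)/4) ((2*b0-b1-b3)/4) c s * St h := by
  have h3 : h^3 = h/2 := by rw [pow_succ, hh]; ring
  unfold St Am Mm
  ext i j
  fin_cases i <;> fin_cases j <;> simp [Matrix.mul_apply, Fin.sum_univ_four] <;> ring_nf <;>
    (try simp only [hh, h3]) <;> (try ring)

noncomputable def cc (x c s : ℝ) : Fin 4 → ℝ := ![2*x*c, -(2*x*s), -(2*x*c), 2*x*s]

noncomputable def At (x h P Q V b0 b2 c s : ℝ) : Mat :=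
  Matrix.of fun i k => exp (cc x c s k - cc x c s i) * Mm h P Q V b0 b2 c s i k
    - if i = k then cc x (-s) c i else 0

noncomputable def Gm (x c s : ℝ) : Mat := Matrix.of fun i k => exp (-(cc x c s i)) * St (sqrt 2/2) i k

lemma Gm_deriv (x t : ℝ) : HasDerivAt (fun t => Gm x (cos t) (sin t))
    (Matrix.of fun i k => -(cc x (-sin t) (cos t) i) * exp (-(cc x (cos t) (sin t) i)) * St (sqrt 2/2) i k) t := by
  apply mat_hasDerivAt
  intro i k
  have hc : HasDerivAt (fun t => cc x (cos t) (sin t) i) (cc x (-sin t) (cos t) i) t := by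
    have hc := (hasDerivAt_cos t).const_mul (2*x)
    have hs := (hasDerivAt_sin t).const_mul (2*x)
    unfold cc
    fin_cases i
    exacts [hc, hs.neg, hc.neg, hs]
  refine ((hc.neg.exp).mul_const (St (sqrt 2/2) i k)).congr_deriv ?_
  simp only [Matrix.of_apply, Pi.neg_apply]
  ring

lemma gauge_rel (x c s p0 p1 b0 b1 b3 : ℝ) :
    At x (sqrt 2/2) (sqrt 2/2/2*(p0+p1)) ((b3-b1)/2) ((p0-p1)/2) ((2*b0+b1+b3)/4) ((2*b0-b1-b3)/4) c s * Gm x c s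
      = (Matrix.of fun i k => -(cc x (-s) c i) * exp (-(cc x c s i)) * St (sqrt 2/2) i k)
        + Gm x c s * Am p0 p1 b0 b1 b3 c s := by
  have hS := St_Am half_sq p0 p1 b0 b1 b3 c s
  ext i j
  have hij := congrFun (congrFun hS i) j
  rw [Matrix.mul_apply, Matrix.mul_apply] at hij
  rw [Matrix.add_apply, Matrix.mul_apply, Matrix.mul_apply]
  unfold At Gm
  simp only [Matrix.of_apply]
  have e1 : ∀ k, exp (-(cc x c s i)) * St (sqrt 2/2) i k * Am p0 p1 b0 b1 b3 c s k j
      = exp (-(cc x c s i)) * (St (sqrt 2/2) i k * Am p0 p1 b0 b1 b3 c s k j) := fun k => by ring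
  simp only [e1]
  rw [← Finset.mul_sum, hij, Finset.mul_sum]
  have e2 : ∀ k, ∀ m : ℝ, (exp (cc x c s k - cc x c s i) * m - if i = k then cc x (-s) c i else 0) *
      (exp (-cc x c s k) * St (sqrt 2 / 2) k j) = exp (-cc x c s i) * (m * St (sqrt 2/2) k j)
       - if i = k then cc x (-s) c i * exp (-cc x c s i) * St (sqrt 2/2) i j else 0 := by
    intro k m
    have : exp (cc x c s k - cc x c s i) * exp (-cc x c s k) = exp (-cc x c s i) := by
      rw [← exp_add]; ring_nf
    rw [← this]
    split_ifs with hik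
    · subst hik; rw [sub_self, exp_zero]; ring
    · ring
  simp only [e2, Finset.sum_sub_distrib, Finset.sum_ite_eq, Finset.mem_univ, if_true]
  ring

lemma Gm_D (x c s : ℝ) : Gm x c s * Dm = Dh * Gm x (-s) c := by
  have h1 := St_Dm
  have e1 : Gm x c s * Dm = Matrix.diagonal (fun i => exp (-(cc x c s i))) * (St (sqrt 2/2) * Dm) := by
    rw [← mul_assoc]; congr 1
    ext i j; rw [Matrix.diagonal_mul]; rfl
  rw [e1, h1]
  ext i j
  rw [Matrix.diagonal_mul, Matrix.mul_apply, Matrix.mul_apply]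
  unfold Gm cc Dh
  fin_cases i <;> simp [Fin.sum_univ_four]

lemma Gm_inv (x c s : ℝ) : ∃ G : Mat, G * Gm x c s = 1 := by
  refine ⟨(St (sqrt 2/2)).transpose * Matrix.diagonal (fun i => exp (cc x c s i)), ?_⟩
  rw [mul_assoc]
  have : Matrix.diagonal (fun i => exp (cc x c s i)) * Gm x c s = St (sqrt 2/2) := by
    ext i j
    rw [Matrix.diagonal_mul]; unfold Gm
    simp only [Matrix.of_apply]
    rw [← mul_assoc, ← exp_add, add_neg_cancel, exp_zero, one_mul]
  rw [this]
  exact mul_eq_one_comm.1 (St_mul half_sq)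

lemma At_cont (x h P Q V b0 b2 : ℝ) : Continuous fun t => At x h P Q V b0 b2 (cos t) (sin t) := by
  apply continuous_matrix
  intro i j
  unfold At Mm cc
  fin_cases i <;> fin_cases j <;> simp <;> fun_prop

lemma traces (x p0 p1 b0 b1 b3 : ℝ) (Y : Mat)
    (hY : Y = trans (fun t => At x (sqrt 2/2) (sqrt 2/2/2*(p0+p1)) ((b3-b1)/2) ((p0-p1)/2) ((2*b0+b1+b3)/4)
      ((2*b0-b1-b3)/4) (cos t) (sin t)) (-(π/8)) (3*π/8)) (T : Mat)
    (hT : T = Dm * trans (fun t => Am p0 p1 b0 b1 b3 (cos t) (sin t)) (-(π/8)) (3*π/8)) :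
    T.trace = (Dh * Y).trace ∧ (T * T).trace = (Dh * Y * (Dh * Y)).trace := by
  have hg := trans_gauge (a := -(π/8)) (b := 3*π/8) _ _ (Am_cont p0 p1 b0 b1 b3) (At_cont x (sqrt 2/2) (sqrt 2/2/2*(p0+p1)) ((b3-b1)/2) ((p0-p1)/2)
    ((2*b0+b1+b3)/4) ((2*b0-b1-b3)/4)) (by linarith [pi_pos]) (Gm_deriv x) (fun t => gauge_rel x _ _ _ _ _ _ _)
  rw [← hY] at hg
  have hb : (3*π/8 : ℝ) = -(π/8) + π/2 := by ring
  have hD := Gm_D x (cos (-(π/8))) (sin (-(π/8)))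
  have hK2 : Gm x (-sin (-(π/8))) (cos (-(π/8))) = Gm x (cos (3*π/8)) (sin (3*π/8)) := by
    rw [hb, cos_add_pi_div_two, sin_add_pi_div_two]
  rw [hK2] at hD
  obtain ⟨G, hG⟩ := Gm_inv x (cos (-(π/8))) (sin (-(π/8)))
  generalize Gm x (cos (-(π/8))) (sin (-(π/8))) = K at *
  generalize Gm x (cos (3*π/8)) (sin (3*π/8)) = K2 at *
  have h1 : K * T = Dh * Y * K := by rw [hT, ← mul_assoc, hD, mul_assoc, hg, mul_assoc]
  have h2 : T = G * (Dh * Y) * K := by rw [mul_assoc, ← h1, ← mul_assoc, hG, one_mul]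
  have hG2 : K * G = 1 := mul_eq_one_comm.1 hG
  constructor
  · rw [h2, Matrix.trace_mul_comm, ← mul_assoc, hG2, one_mul]
  · have : T * T = G * (Dh * Y * (Dh * Y)) * K := by
      calc T * T = (G * (Dh * Y) * K) * (G * (Dh * Y) * K) := by rw [← h2]
        _ = G * (Dh * Y) * (K * G) * (Dh * Y) * K := by noncomm_ring
        _ = _ := by rw [hG2]; noncomm_ring
    rw [this, Matrix.trace_mul_comm, ← mul_assoc, hG2, one_mul]
end TT

namespace TT
open Set Topology
attribute [local instance] Matrix.linftyOpNormedRing Matrix.linftyOpNormedAlgebra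

/-- the connection with scaled coefficients -/
noncomputable def As (x p q v w l c s : ℝ) : Mat :=
  At x (sqrt 2/2) (sqrt x * exp (-(2*sqrt 2*x)) * p) (sqrt x * exp (-(2*sqrt 2*x)) * q)
    (sqrt x * exp (-(4*x)) * v) (x + sqrt x * exp (-(4*x)) * l) (sqrt x * exp (-(4*x)) * w) c s

noncomputable def Nm (n k : ℝ) : Mat := !![0,0,0,0; n,0,0,0; k,0,0,-n; 0,0,0,0]

noncomputable def nn (x p q t : ℝ) : ℝ := sqrt x * exp (2*sqrt 2*x*(cos (t - π/4) - 1)) * (p + (-q) * cos (t - π/4))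
noncomputable def kk (x v w t : ℝ) : ℝ := sqrt x * exp (4*x*(cos (t - 0) - 1)) * (v + (2*w) * cos (t - 0))

lemma bd {x κ M E F X : ℝ} (h1 : E ≤ F - κ * x) (hX : |X| ≤ 3 * M) :
    |exp E * (sqrt x * exp (-F) * X)| ≤ 3 * M * (sqrt x * exp (-(κ*x))) := by
  rw [abs_mul, abs_mul, abs_mul, abs_of_pos (exp_pos _), abs_of_pos (exp_pos _), abs_of_nonneg (sqrt_nonneg _)]
  have : exp E * exp (-F) ≤ exp (-(κ*x)) := by rw [← exp_add]; exact exp_le_exp.2 (by linarith)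
  calc _ = (exp E * exp (-F)) * sqrt x * |X| := by ring
    _ ≤ exp (-(κ*x)) * sqrt x * (3*M) := by gcongr
    _ = _ := by ring

set_option maxHeartbeats 2000000 in
lemma R_bound {x p q v w l M σ t : ℝ} (hx : 0 ≤ x) (hp : |p| ≤ M) (hq : |q| ≤ M) (hv : |v| ≤ M) (hw : |w| ≤ M)
    (hl : |l| ≤ M) (hσ0 : 0 ≤ σ) (hσ1 : σ ≤ 1) (hc : 0 ≤ cos t) (hcs : 0 ≤ cos t + sin t) (hs : |sin t| ≤ σ)
    (hsc : |sin t - cos t| ≤ sqrt 2 * σ) (i j : Fin 4) :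
    |(As x p q v w l (cos t) (sin t) - Nm (nn x p q t) (kk x v w t)) i j|
      ≤ 3 * M * (sqrt x * exp (-(2*sqrt 2*(1-σ)*x))) := by
  have hC : cos (t - π/4) = sqrt 2/2*(cos t + sin t) := by
    rw [cos_sub, cos_pi_div_four, sin_pi_div_four]; ring
  have q2 : sqrt 2 ^ 2 = 2 := sq_sqrt (by norm_num)
  have q2' : sqrt 2 * sqrt 2 = 2 := mul_self_sqrt (by norm_num)
  have hn : exp (2*x*(cos t + sin t)) * (sqrt x * exp (-(2*sqrt 2*x)) * (p - sqrt 2/2*(cos t + sin t)*q)) = nn x p q t := by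
    unfold nn
    rw [hC, show 2*sqrt 2*x*(sqrt 2/2*(cos t + sin t) - 1) = 2*x*(cos t + sin t) + (-(2*sqrt 2*x)) by
      linear_combination (x*(cos t + sin t)) * q2, exp_add]
    ring
  have hk : exp (4*x*cos t) * (sqrt x * exp (-(4*x)) * (v + 2*cos t*w)) = kk x v w t := by
    unfold kk
    rw [sub_zero, show 4*x*(cos t - 1) = 4*x*cos t + (-(4*x)) by ring, exp_add]; ring
  have hc1 := abs_cos_le_one t
  have hs1 := abs_sin_le_one t
  generalize nn x p q t = n at *
  generalize kk x v w t = k at *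
  generalize cos t = c at *
  generalize sin t = s at *
  have s2a : sqrt 2 ≤ 2 := by rw [sqrt_le_left (by norm_num)]; norm_num
  have s2b : 0 ≤ sqrt 2 := sqrt_nonneg _
  have hs' := abs_le.1 hs
  have hsc' := abs_le.1 hsc
  have M0 : 0 ≤ M := (abs_nonneg _).trans hp
  have hsx1 : s * x ≤ σ * x := mul_le_mul_of_nonneg_right hs'.2 hx
  have hsx2 : -σ * x ≤ s * x := mul_le_mul_of_nonneg_right hs'.1 hx
  have hscx1 : (s - c) * x ≤ sqrt 2 * σ * x := mul_le_mul_of_nonneg_right hsc'.2 hx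
  have hscx2 : -(sqrt 2 * σ) * x ≤ (s - c) * x := mul_le_mul_of_nonneg_right hsc'.1 hx
  have hcx : 0 ≤ c * x := mul_nonneg hc hx
  have hcsx : 0 ≤ (c + s) * x := mul_nonneg hcs hx
  have hr : 0 ≤ (2 - sqrt 2) * ((1 - σ) * x) := mul_nonneg (by linarith) (mul_nonneg (by linarith) hx)
  have hr1 : 0 ≤ sqrt 2 * (σ * x) := by positivity
  have hr3 : 0 ≤ σ * x := by positivity
  have hr2 : 0 ≤ (2 - sqrt 2) * x := mul_nonneg (by linarith) hx
  have bX : ∀ y z : ℝ, |y| ≤ 1 → |z| ≤ 1 → |p - sqrt 2/2*(y + z)*q| ≤ 3*M := by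
    intro y z hy hz
    have h1 : |sqrt 2/2*(y+z)| ≤ 2 := by
      rw [abs_mul, abs_of_nonneg (by positivity)]
      have := abs_add_le y z
      have h3 : sqrt 2/2 * |y+z| ≤ 1 * 2 := mul_le_mul (by linarith) (by linarith) (abs_nonneg _) (by norm_num)
      linarith
    have h2 : |sqrt 2/2*(y+z)*q| ≤ 2 * M := by
      rw [abs_mul]; exact mul_le_mul h1 hq (abs_nonneg _) (by norm_num)
    have := abs_sub p (sqrt 2/2*(y+z)*q)
    linarith
  have bV : ∀ y : ℝ, |y| ≤ 1 → |v + 2*y*w| ≤ 3*M := by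
    intro y hy
    have h2 : |2*y*w| ≤ 2 * M := by
      rw [abs_mul, abs_mul, abs_two]; exact mul_le_mul (by linarith) hw (abs_nonneg _) (by norm_num)
    have := abs_add_le v (2*y*w)
    linarith
  have bL : ∀ y : ℝ, |y| ≤ 1 → |2*y*l| ≤ 3*M := by
    intro y hy
    have h2 : |2*y*l| ≤ 2 * M := by
      rw [abs_mul, abs_mul, abs_two]; exact mul_le_mul (by linarith) hl (abs_nonneg _) (by norm_num)
    linarith
  have nc : |-c| ≤ 1 := by rwa [abs_neg]
  have ns : |-s| ≤ 1 := by rwa [abs_neg]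
  have z : |(0:ℝ)| ≤ 3 * M * (sqrt x * exp (-(2*sqrt 2*(1-σ)*x))) := by rw [abs_zero]; positivity
  have neg : ∀ {y b : ℝ}, |y| ≤ b → |-y| ≤ b := fun h => by rwa [abs_neg]
  have ex : ∀ y : ℝ, exp (y - y) = 1 := fun y => by rw [sub_self, exp_zero]
  have U : ∀ i j : Fin 4, ∀ y, (As x p q v w l c s - Nm n k) i j = y →
     |y| ≤ 3 * M * (sqrt x * exp (-(2*sqrt 2*(1-σ)*x))) →
     |(As x p q v w l c s - Nm n k) i j| ≤ 3 * M * (sqrt x * exp (-(2*sqrt 2*(1-σ)*x))) := by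
    intro i j y h h'; rwa [h]
  fin_cases i <;> fin_cases j
  · refine U _ _ _ ?_ (bd (E := 0) (F := 4*x) (X := 2*(-s)*l) (by linarith) (bL _ ns))
    simp [As, At, Mm, cc, Nm]; ring
  · refine U _ _ _ ?_ (neg (bd (E := -(2*x*(c+s))) (F := 2*sqrt 2*x) (by linarith) (bX (-s) (-c) ns nc)))
    simp [As, At, Mm, cc, Nm]; ring_nf
  · refine U _ _ _ ?_ (neg (bd (E := -(4*x*c)) (F := 4*x) (by linarith) (bV (-c) nc)))
    simp [As, At, Mm, cc, Nm]; ring_nf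
  · refine U _ _ _ ?_ (neg (bd (E := (2*x*(s-c))) (F := 2*sqrt 2*x) (by linarith) (bX s (-c) hs1 nc)))
    simp [As, At, Mm, cc, Nm]; ring_nf
  · refine U _ _ 0 ?_ z
    rw [Matrix.sub_apply, sub_eq_zero]
    refine Eq.trans ?_ hn
    simp [As, At, Mm, cc]; ring_nf
  · refine U _ _ _ ?_ (bd (E := 0) (F := 4*x) (X := 2*(-c)*l) (by linarith) (bL _ nc))
    simp [As, At, Mm, cc, Nm]; ring
  · refine U _ _ _ ?_ (neg (bd (E := (2*x*(s-c))) (F := 2*sqrt 2*x) (by linarith) (bX (-c) s nc hs1)))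
    simp [As, At, Mm, cc, Nm]; ring_nf
  · refine U _ _ _ ?_ (neg (bd (E := 4*x*s) (F := 4*x) (by linarith) (bV s hs1)))
    simp [As, At, Mm, cc, Nm]; ring_nf
  · refine U _ _ 0 ?_ z
    rw [Matrix.sub_apply, sub_eq_zero]
    refine Eq.trans ?_ hk
    simp [As, At, Mm, cc]; ring_nf
  · refine U _ _ _ ?_ (bd (E := (2*x*(c-s))) (F := 2*sqrt 2*x) (by linarith) (bX (-s) c ns hc1))
    simp [As, At, Mm, cc, Nm]; ring_nf
  · refine U _ _ _ ?_ (bd (E := 0) (F := 4*x) (X := 2*s*l) (by linarith) (bL _ hs1))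
    simp [As, At, Mm, cc, Nm]; ring
  · refine U _ _ 0 ?_ z
    rw [Matrix.sub_apply, sub_eq_zero]
    refine Eq.trans ?_ (congrArg Neg.neg hn)
    simp [As, At, Mm, cc]; ring_nf
  · refine U _ _ _ ?_ (bd (E := (2*x*(c-s))) (F := 2*sqrt 2*x) (by linarith) (bX c (-s) hc1 ns))
    simp [As, At, Mm, cc, Nm]; ring_nf
  · refine U _ _ _ ?_ (bd (E := -(4*x*s)) (F := 4*x) (by linarith) (bV (-s) ns))
    simp [As, At, Mm, cc, Nm]; ring_nf
  · refine U _ _ _ ?_ (bd (E := -(2*x*(c+s))) (F := 2*sqrt 2*x) (by linarith) (bX (-c) (-s) nc ns))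
    simp [As, At, Mm, cc, Nm]; ring_nf
  · refine U _ _ _ ?_ (bd (E := 0) (F := 4*x) (X := 2*c*l) (by linarith) (bL _ hc1))
    simp [As, At, Mm, cc, Nm]; ring
end TT

namespace TT
open Set Topology
attribute [local instance] Matrix.linftyOpNormedRing Matrix.linftyOpNormedAlgebra

noncomputable def Zm (f g : ℝ) : Mat := !![1,0,0,0; f,1,0,0; g,0,1,-f; 0,0,0,1]

lemma trig_facts {t : ℝ} (h1 : -(π/8) ≤ t) (h2 : t ≤ 3*π/8) :
    0 ≤ cos t ∧ 0 ≤ cos t + sin t ∧ |sin t| ≤ sin (3*π/8) ∧ |sin t - cos t| ≤ sqrt 2 * sin (3*π/8) := by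
  have hp := pi_pos
  have q2' : sqrt 2 * sqrt 2 = 2 := mul_self_sqrt (by norm_num)
  have hS : ∀ y, -(3*π/8) ≤ y → y ≤ 3*π/8 → |sin y| ≤ sin (3*π/8) := by
    intro y y1 y2
    rw [abs_le, ← sin_neg]
    constructor
    · exact sin_le_sin_of_le_of_le_pi_div_two (by linarith) (by linarith) y1
    · exact sin_le_sin_of_le_of_le_pi_div_two (by linarith) (by linarith) y2
  refine ⟨cos_nonneg_of_mem_Icc ⟨by linarith, by linarith⟩, ?_, hS t (by linarith) h2, ?_⟩
  · have h := cos_nonneg_of_mem_Icc (x := t - π/4) ⟨by linarith, by linarith⟩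
    rw [cos_sub, cos_pi_div_four, sin_pi_div_four] at h
    have : 0 < sqrt 2 := by positivity
    by_contra hh
    push Not at hh
    nlinarith
  · have h := hS (t - π/4) (by linarith) (by linarith)
    have e : sin t - cos t = sqrt 2 * sin (t - π/4) := by
      rw [sin_sub, cos_pi_div_four, sin_pi_div_four]
      linear_combination (-(sin t - cos t)/2) * q2'
    rw [e, abs_mul, abs_of_nonneg (sqrt_nonneg _)]
    gcongr

lemma nn_bound {x p q M : ℝ} (hx : 0 ≤ x) (hp : |p| ≤ M) (hq : |q| ≤ M) (t : ℝ) : |nn x p q t| ≤ 3 * M * sqrt x := by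
  unfold nn
  have M0 : 0 ≤ M := (abs_nonneg _).trans hp
  have hc := abs_cos_le_one (t - π/4)
  have h1 : exp (2*sqrt 2*x*(cos (t - π/4) - 1)) ≤ 1 := by
    rw [exp_le_one_iff]
    exact mul_nonpos_of_nonneg_of_nonpos (by positivity) (by linarith [cos_le_one (t - π/4)])
  have h2 : |p + (-q) * cos (t - π/4)| ≤ 3*M := by
    have := abs_add_le p ((-q) * cos (t - π/4))
    have := mul_bd (y := -q) hc
    rw [abs_neg] at this
    linarith
  rw [abs_mul, abs_mul, abs_of_nonneg (sqrt_nonneg _), abs_of_pos (exp_pos _)]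
  calc _ ≤ sqrt x * 1 * (3*M) := by gcongr
    _ = _ := by ring

lemma kk_bound {x p q M : ℝ} (hx : 0 ≤ x) (hp : |p| ≤ M) (hq : |q| ≤ M) (t : ℝ) : |kk x p q t| ≤ 3 * M * sqrt x := by
  unfold kk
  have M0 : 0 ≤ M := (abs_nonneg _).trans hp
  have hc := abs_cos_le_one (t - 0)
  have h1 : exp (4*x*(cos (t - 0) - 1)) ≤ 1 := by
    rw [exp_le_one_iff]
    exact mul_nonpos_of_nonneg_of_nonpos (by positivity) (by linarith [cos_le_one (t - 0)])
  have h2 : |p + (2*q) * cos (t - 0)| ≤ 3*M := by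
    have := abs_add_le p ((2*q) * cos (t - 0))
    have := mul_bd (y := 2*q) hc
    have h9 : |2*q| = 2*|q| := by rw [abs_mul, abs_two]
    rw [h9] at this
    linarith
  rw [abs_mul, abs_mul, abs_of_nonneg (sqrt_nonneg _), abs_of_pos (exp_pos _)]
  calc _ ≤ sqrt x * 1 * (3*M) := by gcongr
    _ = _ := by ring

lemma nn_cont (x p q : ℝ) : Continuous (nn x p q) := by unfold nn; fun_prop
lemma kk_cont (x p q : ℝ) : Continuous (kk x p q) := by unfold kk; fun_prop

lemma prim_deriv {f : ℝ → ℝ} (hf : Continuous f) (a t : ℝ) :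
    HasDerivAt (fun t => ∫ y in a..t, f y) (f t) t :=
  intervalIntegral.integral_hasDerivAt_right (hf.intervalIntegrable _ _)
    hf.stronglyMeasurable.stronglyMeasurableAtFilter hf.continuousAt

lemma Zm_deriv {f g : ℝ → ℝ} {f' g' t : ℝ} (hf : HasDerivAt f f' t) (hg : HasDerivAt g g' t) :
    HasDerivAt (fun t => Zm (f t) (g t)) (Nm f' g') t := by
  apply mat_hasDerivAt
  intro i j
  have z := hasDerivAt_const t (0:ℝ)
  have o := hasDerivAt_const t (1:ℝ)
  unfold Zm Nm
  fin_cases i <;> fin_cases j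
  exacts [o, z, z, z, hf, o, z, z, hg, z, o, hf.neg, z, z, z, o]

lemma Nm_Zm (n k f g : ℝ) : Nm n k * Zm f g = Nm n k := by
  unfold Nm Zm
  ext i j
  fin_cases i <;> fin_cases j <;> simp [Matrix.mul_apply, Fin.sum_univ_four]

lemma Nm_norm {n k C : ℝ} (hn : |n| ≤ C) (hk : |k| ≤ C) : ‖Nm n k‖ ≤ 4 * C := by
  have : 0 ≤ C := (abs_nonneg _).trans hn
  apply norm_le_of_elem
  intro i j
  unfold Nm
  fin_cases i <;> fin_cases j <;> simp <;> assumption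

lemma Zm_norm {n k C : ℝ} (hn : |n| ≤ C) (hk : |k| ≤ C) : ‖Zm n k‖ ≤ 4 * (1 + C) := by
  have : 0 ≤ C := (abs_nonneg _).trans hn
  apply norm_le_of_elem
  intro i j
  unfold Zm
  fin_cases i <;> fin_cases j <;> simp <;> linarith

lemma Y_close {x p q v w l M : ℝ} (hx : 0 ≤ x) (hp : |p| ≤ M) (hq : |q| ≤ M) (hv : |v| ≤ M) (hw : |w| ≤ M)
    (hl : |l| ≤ M) :
    ‖Zm (∫ t in (-(π/8))..(3*π/8), nn x p q t) (∫ t in (-(π/8))..(3*π/8), kk x v w t)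
      - trans (fun t => As x p q v w l (cos t) (sin t)) (-(π/8)) (3*π/8)‖
      ≤ (12 * M * (sqrt x * exp (-(2*sqrt 2*(1-sin (3*π/8))*x))) * (4 * (1 + 3 * M * sqrt x * 2)))
        * (3*π/8 - -(π/8)) * exp (24 * M * sqrt x * (3*π/8 - -(π/8))) := by
  have hpi := pi_pos
  have M0 : 0 ≤ M := (abs_nonneg _).trans hp
  have hab : -(π/8) ≤ 3*π/8 := by linarith
  have σ1 : sin (3*π/8) ≤ 1 := sin_le_one _
  have σ0 : 0 ≤ sin (3*π/8) := sin_nonneg_of_nonneg_of_le_pi (by linarith) (by linarith)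
  set r := sqrt x * exp (-(2*sqrt 2*(1-sin (3*π/8))*x)) with hr
  have hr0 : 0 ≤ r := by positivity
  have hrx : r ≤ sqrt x := by
    have : exp (-(2*sqrt 2*(1-sin (3*π/8))*x)) ≤ 1 := by
      rw [exp_le_one_iff, neg_nonpos]
      have : 0 ≤ 1 - sin (3*π/8) := by linarith
      positivity
    rw [hr]; exact mul_le_of_le_one_right (sqrt_nonneg _) this
  have hR : ∀ t ∈ Icc (-(π/8)) (3*π/8),
      ‖As x p q v w l (cos t) (sin t) - Nm (nn x p q t) (kk x v w t)‖ ≤ 12 * M * r := by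
    intro t ht
    obtain ⟨f1, f2, f3, f4⟩ := trig_facts ht.1 ht.2
    have := norm_le_of_elem (R_bound hx hp hq hv hw hl σ0 σ1 f1 f2 f3 f4)
    linarith
  have hN : ∀ t, ‖Nm (nn x p q t) (kk x v w t)‖ ≤ 12 * M * sqrt x := by
    intro t
    have := Nm_norm (nn_bound hx hp hq t) (kk_bound hx hv hw t)
    linarith
  have hprim : ∀ f : ℝ → ℝ, (∀ t, |f t| ≤ 3 * M * sqrt x) → ∀ t ∈ Icc (-(π/8)) (3*π/8),
      |∫ y in (-(π/8))..t, f y| ≤ 3 * M * sqrt x * 2 := by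
    intro f hf t ht
    have := intervalIntegral.norm_integral_le_of_norm_le_const (a := -(π/8)) (b := t) (f := f)
      (C := 3 * M * sqrt x) (fun y _ => hf y)
    rw [Real.norm_eq_abs] at this
    refine this.trans ?_
    apply mul_le_mul_of_nonneg_left _ (by positivity)
    rw [abs_of_nonneg (by linarith [ht.1])]
    linarith [ht.2, pi_lt_four]
  have hZd : ∀ t, HasDerivAt (fun t => Zm (∫ y in (-(π/8))..t, nn x p q y) (∫ y in (-(π/8))..t, kk x v w y))
      (Nm (nn x p q t) (kk x v w t)) t := fun t =>
    Zm_deriv (prim_deriv (nn_cont _ _ _) _ t) (prim_deriv (kk_cont _ _ _) _ t)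
  have hcont : Continuous fun t => As x p q v w l (cos t) (sin t) := At_cont _ _ _ _ _ _ _
  have := trans_close (fun t => As x p q v w l (cos t) (sin t)) hcont hab
      (fun t _ => (hZd t).continuousAt.continuousWithinAt)
      (fun t _ => (hZd t).hasDerivWithinAt) (K := 24 * M * sqrt x) (ε := 12 * M * r * (4 * (1 + 3 * M * sqrt x * 2)))
      (by positivity) (by positivity) (by
        intro t ht
        have h1 := hR t ht
        have h2 := norm_sub_norm_le (As x p q v w l (cos t) (sin t)) (Nm (nn x p q t) (kk x v w t))
        have h3 := hN t
        have h4 : M * r ≤ M * sqrt x := by gcongr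
        show ‖As x p q v w l (cos t) (sin t)‖ ≤ _
        linarith) (by
        intro t ht
        have ht' : t ∈ Icc (-(π/8)) (3*π/8) := ⟨ht.1, ht.2.le⟩
        have e : Nm (nn x p q t) (kk x v w t) - As x p q v w l (cos t) (sin t) *
            Zm (∫ y in (-(π/8))..t, nn x p q y) (∫ y in (-(π/8))..t, kk x v w y)
            = -((As x p q v w l (cos t) (sin t) - Nm (nn x p q t) (kk x v w t)) *
              Zm (∫ y in (-(π/8))..t, nn x p q y) (∫ y in (-(π/8))..t, kk x v w y)) := by
          rw [sub_mul, Nm_Zm, neg_sub]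
        show ‖Nm (nn x p q t) (kk x v w t) - As x p q v w l (cos t) (sin t) *
            Zm (∫ y in (-(π/8))..t, nn x p q y) (∫ y in (-(π/8))..t, kk x v w y)‖ ≤ _
        rw [e, norm_neg]
        refine (norm_mul_le _ _).trans ?_
        exact mul_le_mul (hR t ht') (Zm_norm (hprim _ (nn_bound hx hp hq) t ht') (hprim _ (kk_bound hx hv hw) t ht'))
          (norm_nonneg _) (by positivity))
  have e1 : Zm (∫ y in (-(π/8))..(-(π/8)), nn x p q y) (∫ y in (-(π/8))..(-(π/8)), kk x v w y) = 1 := by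
    rw [intervalIntegral.integral_same, intervalIntegral.integral_same]
    unfold Zm
    ext i j
    fin_cases i <;> fin_cases j <;> simp
  rw [e1, mul_one] at this
  exact this

lemma err_lim {M κ d : ℝ} (hM : 0 ≤ M) (hκ : 0 < κ) (hd : 0 ≤ d) :
    Tendsto (fun x => (12 * M * (sqrt x * exp (-(κ*x))) * (4 * (1 + 3 * M * sqrt x * 2)))
        * d * exp (24 * M * sqrt x * d)) atTop (𝓝 0) := by
  set c := 1 + 6*M + 24*M*d with hc
  have h1 : Tendsto (fun x : ℝ => 48*M*d*exp (sqrt x * (c - κ * sqrt x))) atTop (𝓝 (48*M*d*0)) := by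
    apply Tendsto.const_mul
    apply tendsto_exp_atBot.comp
    have hs : Tendsto (fun x : ℝ => sqrt x) atTop atTop := tendsto_sqrt_atTop
    apply hs.atTop_mul_atBot₀
    have := (hs.const_mul_atTop hκ)
    exact tendsto_atBot_add_const_left _ c (tendsto_neg_atTop_atBot.comp this)
  rw [mul_zero] at h1
  refine squeeze_zero' ?_ ?_ h1
  · exact Eventually.of_forall fun x => by positivity
  · filter_upwards [eventually_ge_atTop 0] with x hx
    have q : sqrt x * sqrt x = x := mul_self_sqrt hx
    have a1 : sqrt x ≤ exp (sqrt x) := by linarith [add_one_le_exp (sqrt x)]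
    have a2 : 1 + 3 * M * sqrt x * 2 ≤ exp (6*M*sqrt x) := by linarith [add_one_le_exp (6*M*sqrt x)]
    have e : exp (sqrt x * (c - κ * sqrt x)) = exp (sqrt x) * exp (-(κ*x)) * exp (6*M*sqrt x) * exp (24 * M * sqrt x * d) := by
      rw [← exp_add, ← exp_add, ← exp_add]
      congr 1
      rw [hc]; linear_combination (-κ) * q
    rw [e]
    calc _ ≤ (12 * M * (exp (sqrt x) * exp (-(κ*x))) * (4 * exp (6*M*sqrt x))) * d * exp (24 * M * sqrt x * d) := by
          gcongr
      _ = _ := by ring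

lemma Y_lim {p q v w l : ℝ → ℝ} {p0 q0 v0 w0 l0 : ℝ} (hp : Tendsto p atTop (𝓝 p0)) (hq : Tendsto q atTop (𝓝 q0))
    (hv : Tendsto v atTop (𝓝 v0)) (hw : Tendsto w atTop (𝓝 w0)) (hl : Tendsto l atTop (𝓝 l0)) :
    Tendsto (fun x => trans (fun t => As x (p x) (q x) (v x) (w x) (l x) (cos t) (sin t)) (-(π/8)) (3*π/8)) atTop
      (𝓝 (Zm ((p0 + -q0) * sqrt (2*π/(2*sqrt 2))) ((v0 + 2*w0) * sqrt (2*π/4)))) := by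
  have hpi := pi_pos
  set M := |p0| + |q0| + |v0| + |w0| + |l0| + 1 with hM
  have B : ∀ {f : ℝ → ℝ} {f0 : ℝ}, Tendsto f atTop (𝓝 f0) → |f0| < M → ∀ᶠ x in atTop, |f x| ≤ M :=
    fun hf h => (hf.abs.eventually_lt_const h).mono fun _ => le_of_lt
  have np := abs_nonneg p0
  have nq := abs_nonneg q0
  have nv := abs_nonneg v0
  have nw := abs_nonneg w0
  have nl := abs_nonneg l0
  have I1 : Tendsto (fun x => ∫ t in (-(π/8))..(3*π/8), nn x (p x) (q x) t) atTop
      (𝓝 ((p0 + -q0) * sqrt (2*π/(2*sqrt 2)))) :=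
    laplace_shift (by positivity) (by linarith) (by linarith) (by linarith) (by linarith) hp hq.neg
  have I2 : Tendsto (fun x => ∫ t in (-(π/8))..(3*π/8), kk x (v x) (w x) t) atTop
      (𝓝 ((v0 + 2*w0) * sqrt (2*π/4))) :=
    laplace_shift (by positivity) (by linarith) (by linarith) (by linarith) (by linarith) hv (hw.const_mul 2)
  have hσ : sin (3*π/8) < 1 := by
    rw [← sin_pi_div_two]
    exact sin_lt_sin_of_lt_of_le_pi_div_two (by linarith) le_rfl (by linarith)
  have hZ : Continuous (fun y : ℝ × ℝ => Zm y.1 y.2) := by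
    apply continuous_matrix
    intro i j
    unfold Zm
    fin_cases i <;> fin_cases j <;> simp <;> fun_prop
  have hZl := (hZ.tendsto _).comp (I1.prodMk_nhds I2)
  have hE := err_lim (M := M) (κ := 2*sqrt 2*(1-sin (3*π/8))) (d := 3*π/8 - -(π/8)) (by positivity)
    (mul_pos (by positivity) (by linarith)) (by linarith)
  have hd : Tendsto (fun x => Zm (∫ t in (-(π/8))..(3*π/8), nn x (p x) (q x) t) (∫ t in (-(π/8))..(3*π/8), kk x (v x) (w x) t)
      - trans (fun t => As x (p x) (q x) (v x) (w x) (l x) (cos t) (sin t)) (-(π/8)) (3*π/8)) atTop (𝓝 0) := by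
    refine squeeze_zero_norm' ?_ hE
    filter_upwards [eventually_ge_atTop 0, B hp (by linarith), B hq (by linarith), B hv (by linarith),
      B hw (by linarith), B hl (by linarith)] with x h0 h1 h2 h3 h4 h5
    exact Y_close h0 h1 h2 h3 h4 h5
  have := hZl.sub hd
  rw [sub_zero] at this
  refine this.congr fun x => ?_
  simp only [Function.comp]
  exact sub_sub_cancel _ _
end TT

namespace TT
open Set Topology
attribute [local instance] Matrix.linftyOpNormedRing Matrix.linftyOpNormedAlgebra

lemma zero_of_abs {f g : ℝ → ℝ} (hg : Tendsto g atTop (𝓝 0)) (h : ∀ᶠ x in atTop, |f x| ≤ g x) :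
    Tendsto f atTop (𝓝 0) :=
  squeeze_zero_norm' h hg

lemma conn {w0 w1 d0 d1 : ℝ → ℝ} (H : Sol w0 w1 d0 d1) {γ0 γ1 : ℝ}
    (hγ0 : -1 < γ0) (hγ1 : γ1 < 1) (hγ : γ1 > γ0 - 2)
    (l0 : Tendsto (fun r => 2 * w0 r / log r) (𝓝[>] 0) (𝓝 γ0))
    (l1 : Tendsto (fun r => 2 * w1 r / log r) (𝓝[>] 0) (𝓝 γ1))
    {u v u1 v1 : ℝ → ℝ} (eu : ∀ x, u x = w0 x + w1 x) (ev : ∀ x, v x = w0 x - w1 x)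
    (eu1 : ∀ x, u1 x = d0 x + d1 x) (ev1 : ∀ x, v1 x = d0 x - d1 x)
    (lu : Tendsto u atTop (𝓝 0)) (lv : Tendsto v atTop (𝓝 0)) {A B : ℝ}
    (hA : Tendsto (fun r => sqrt r * exp (2 * sqrt 2 * r) * u r) atTop (𝓝 A))
    (hA1 : Tendsto (fun r => sqrt r * exp (2 * sqrt 2 * r) * u1 r) atTop (𝓝 (-(2 * sqrt 2) * A)))
    (hB : Tendsto (fun r => sqrt r * exp (4 * r) * v r) atTop (𝓝 B))
    (hB1 : Tendsto (fun r => sqrt r * exp (4 * r) * v1 r) atTop (𝓝 (-4 * B))) :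
    2 * A * sqrt (2*π/(2*sqrt 2)) = 2 * cos (π * (γ0 + 1) / 4) + 2 * cos (π * (γ1 + 3) / 4) ∧
    4 * B * sqrt (2*π/4) = -2 - 4 * cos (π * (γ0 + 1) / 4) * cos (π * (γ1 + 3) / 4) := by
  have q2 : sqrt 2 * sqrt 2 = 2 := mul_self_sqrt (by norm_num)
  have u1s : ∀ᶠ x in atTop, |u x| ≤ 1 := by
    have := lu.abs; rw [abs_zero] at this
    exact (this.eventually_lt_const one_pos).mono fun _ => le_of_lt
  have v1s : ∀ᶠ x in atTop, |v x| ≤ 1 := by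
    have := lv.abs; rw [abs_zero] at this
    exact (this.eventually_lt_const one_pos).mono fun _ => le_of_lt
  have lev : Tendsto (fun x => exp (v x)) atTop (𝓝 1) := by
    have := lv.rexp; rwa [exp_zero] at this
  -- sinh u
  have su : Tendsto (fun r => sqrt r * exp (2 * sqrt 2 * r) * (sinh (u r) - u r)) atTop (𝓝 0) := by
    have h := (hA.mul lu).abs
    rw [mul_zero, abs_zero] at h
    refine zero_of_abs h ?_
    filter_upwards [u1s] with r hr
    rw [mul_assoc _ (u r), abs_mul (sqrt r * exp (2 * sqrt 2 * r)), abs_mul (sqrt r * exp (2 * sqrt 2 * r))]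
    refine mul_le_mul_of_nonneg_left ?_ (abs_nonneg _)
    rw [← sq, abs_sq]
    exact sinh_sub_le hr
  have sv : Tendsto (fun r => sqrt r * exp (4 * r) * (sinh (v r) - v r)) atTop (𝓝 0) := by
    have h := (hB.mul lv).abs
    rw [mul_zero, abs_zero] at h
    refine zero_of_abs h ?_
    filter_upwards [v1s] with r hr
    rw [mul_assoc _ (v r), abs_mul (sqrt r * exp (4 * r)), abs_mul (sqrt r * exp (4 * r))]
    refine mul_le_mul_of_nonneg_left ?_ (abs_nonneg _)
    rw [← sq, abs_sq]
    exact sinh_sub_le hr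
  have cv : Tendsto (fun r => sqrt r * exp (4 * r) * (cosh (v r) - 1)) atTop (𝓝 0) := by
    have h := (hB.mul lv).abs
    rw [mul_zero, abs_zero] at h
    refine zero_of_abs h ?_
    filter_upwards [v1s] with r hr
    rw [mul_assoc _ (v r), abs_mul (sqrt r * exp (4 * r)), abs_mul (sqrt r * exp (4 * r))]
    refine mul_le_mul_of_nonneg_left ?_ (abs_nonneg _)
    rw [← sq, abs_sq, abs_of_nonneg (by linarith [one_le_cosh (v r)])]
    exact cosh_sub_le hr
  have cu : Tendsto (fun r => sqrt r * exp (4 * r) * (cosh (u r) - 1)) atTop (𝓝 0) := by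
    have hk : (0:ℝ) < 4 * sqrt 2 - 4 := by
      have : (1:ℝ) < sqrt 2 := by rw [lt_sqrt (by norm_num)]; norm_num
      linarith
    have h := (hA.mul hA).mul (exp_neg_lim hk)
    rw [mul_zero] at h
    refine zero_of_abs h ?_
    filter_upwards [u1s, eventually_ge_atTop 1] with r hr hr1
    have n0 : 0 ≤ cosh (u r) - 1 := by linarith [one_le_cosh (u r)]
    have n1 : 1 ≤ sqrt r := by rwa [one_le_sqrt]
    rw [abs_of_nonneg (by positivity)]
    have e : sqrt r * exp (2 * sqrt 2 * r) * u r * (sqrt r * exp (2 * sqrt 2 * r) * u r) * exp (-((4 * sqrt 2 - 4) * r))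
        = sqrt r * (sqrt r * exp (4*r)) * u r^2 := by
      have : exp (4*r) = exp (2 * sqrt 2 * r) * exp (2 * sqrt 2 * r) * exp (-((4 * sqrt 2 - 4) * r)) := by
        rw [← exp_add, ← exp_add]; ring_nf
      rw [this]; ring
    rw [e]
    have c1 := cosh_sub_le hr
    calc _ ≤ sqrt r * exp (4*r) * u r^2 := by gcongr
      _ = 1 * (sqrt r * exp (4*r)) * u r^2 := by ring
      _ ≤ _ := by gcongr
  -- scaled coefficients
  set p : ℝ → ℝ := fun r => sqrt 2/4 * (sqrt r * exp (2 * sqrt 2 * r) * u1 r) with hp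
  set q : ℝ → ℝ := fun r => exp (v r) * (sqrt r * exp (2 * sqrt 2 * r) * u r + sqrt r * exp (2 * sqrt 2 * r) * (sinh (u r) - u r)) with hq
  set vv : ℝ → ℝ := fun r => 1/2 * (sqrt r * exp (4 * r) * v1 r) with hvv
  set w : ℝ → ℝ := fun r => -(sqrt r * exp (4 * r) * v r + sqrt r * exp (4 * r) * (sinh (v r) - v r)
    + 1/2 * exp (v r) * (sqrt r * exp (4 * r) * (cosh (u r) - 1))) with hw
  set l : ℝ → ℝ := fun r => sqrt r * exp (4 * r) * (cosh (v r) - 1)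
    + 1/2 * exp (v r) * (sqrt r * exp (4 * r) * (cosh (u r) - 1)) with hl
  have Lp : Tendsto p atTop (𝓝 (-A)) := by
    have := hA1.const_mul (sqrt 2/4)
    rwa [show sqrt 2/4 * (-(2 * sqrt 2) * A) = -A by linear_combination (-A/2) * q2] at this
  have Lq : Tendsto q atTop (𝓝 A) := by
    have := lev.mul (hA.add su)
    rwa [add_zero, one_mul] at this
  have Lv : Tendsto vv atTop (𝓝 (-2*B)) := by
    have := hB1.const_mul (1/2)
    rwa [show 1/2 * (-4 * B) = -2*B by ring] at this
  have L2 : Tendsto (fun r => 1/2 * exp (v r) * (sqrt r * exp (4 * r) * (cosh (u r) - 1))) atTop (𝓝 0) := by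
    have := (lev.const_mul (1/2)).mul cu
    rwa [mul_zero] at this
  have Lw : Tendsto w atTop (𝓝 (-B)) := by
    have := ((hB.add sv).add L2).neg
    rwa [add_zero, add_zero] at this
  have Ll : Tendsto l atTop (𝓝 0) := by
    have := cv.add L2
    rwa [add_zero] at this
  have hY := Y_lim Lp Lq Lv Lw Ll
  set Y : ℝ → Mat := fun x => trans (fun t => As x (p x) (q x) (vv x) (w x) (l x) (cos t) (sin t)) (-(π/8)) (3*π/8) with hYdef
  have key : ∀ x > 0, (Dh * Y x).trace = 2 * cos (π * (γ0 + 1) / 4) + 2 * cos (π * (γ1 + 3) / 4) ∧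
      (Dh * Y x * (Dh * Y x)).trace = 4 * cos (π * (γ0 + 1) / 4) ^ 2 + 4 * cos (π * (γ1 + 3) / 4) ^ 2 - 4 := by
    intro x hx
    have hz := tr_zero H hγ0 hγ1 hγ l0 l1 x hx
    have sx : sqrt x * sqrt x = x := mul_self_sqrt hx.le
    have ex : exp (-(2*sqrt 2*x)) * exp (2*sqrt 2*x) = 1 := by rw [← exp_add, neg_add_cancel, exp_zero]
    have ey : exp (-(4*x)) * exp (4*x) = 1 := by rw [← exp_add, neg_add_cancel, exp_zero]
    have m1 : ∀ y, sqrt x * exp (-(2*sqrt 2*x)) * (sqrt x * exp (2*sqrt 2*x) * y) = x * y := by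
      intro y
      calc _ = (sqrt x * sqrt x) * (exp (-(2*sqrt 2*x)) * exp (2*sqrt 2*x)) * y := by ring
        _ = _ := by rw [sx, ex, mul_one]
    have m2 : ∀ y, sqrt x * exp (-(4*x)) * (sqrt x * exp (4*x) * y) = x * y := by
      intro y
      calc _ = (sqrt x * sqrt x) * (exp (-(4*x)) * exp (4*x)) * y := by ring
        _ = _ := by rw [sx, ey, mul_one]
    have x0 : exp (2 * w0 x) = exp (v x) * exp (u x) := by rw [← exp_add, eu, ev]; ring_nf
    have x1 : exp (-(2 * w1 x)) = exp (v x) * exp (-u x) := by rw [← exp_add, eu, ev]; ring_nf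
    have x2 : exp (w1 x - w0 x) = exp (-v x) := by rw [ev]; ring_nf
    have hAs : Y x = trans (fun t => At x (sqrt 2/2) (sqrt 2/2/2*(x*d0 x+x*d1 x)) ((x * exp (2 * w0 x)-x * exp (-(2 * w1 x)))/2)
      ((x*d0 x-x*d1 x)/2) ((2*(x * exp (w1 x - w0 x))+x * exp (-(2 * w1 x))+x * exp (2 * w0 x))/4)
      ((2*(x * exp (w1 x - w0 x))-x * exp (-(2 * w1 x))-x * exp (2 * w0 x))/4) (cos t) (sin t)) (-(π/8)) (3*π/8) := by
      have c1 : sqrt x * exp (-(2*sqrt 2*x)) * p x = sqrt 2/2/2*(x*d0 x+x*d1 x) := by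
        have := m1 (sqrt 2/4 * u1 x)
        rw [eu1] at this
        simp only [hp]
        rw [eu1]
        linear_combination this
      have c2 : sqrt x * exp (-(2*sqrt 2*x)) * q x = (x * exp (2 * w0 x)-x * exp (-(2 * w1 x)))/2 := by
        rw [x0, x1]
        have := m1 (exp (v x) * sinh (u x))
        rw [sinh_eq] at this
        simp only [hq]
        rw [sinh_eq]
        linear_combination this
      have c3 : sqrt x * exp (-(4*x)) * vv x = (x*d0 x-x*d1 x)/2 := by
        have := m2 (1/2 * v1 x)
        rw [ev1] at this
        simp only [hvv]
        rw [ev1]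
        linear_combination this
      have c4 : x + sqrt x * exp (-(4*x)) * l x = (2*(x * exp (w1 x - w0 x))+x * exp (-(2 * w1 x))+x * exp (2 * w0 x))/4 := by
        rw [x0, x1, x2]
        have := m2 (cosh (v x) - 1 + 1/2*exp (v x) * (cosh (u x) - 1))
        rw [cosh_eq, cosh_eq] at this
        simp only [hl]
        rw [cosh_eq, cosh_eq]
        linear_combination this
      have c5 : sqrt x * exp (-(4*x)) * w x = (2*(x * exp (w1 x - w0 x))-x * exp (-(2 * w1 x))-x * exp (2 * w0 x))/4 := by
        rw [x0, x1, x2]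
        have := m2 (-(sinh (v x) + 1/2*exp (v x) * (cosh (u x) - 1)))
        rw [cosh_eq, sinh_eq] at this
        simp only [hw]
        rw [cosh_eq, sinh_eq]
        linear_combination this
      simp only [hYdef, As, c1, c2, c3, c4, c5]
    have ht := traces x (x*d0 x) (x*d1 x) (x * exp (w1 x - w0 x)) (x * exp (-(2 * w1 x))) (x * exp (2 * w0 x)) (Y x) hAs
      (Tm w0 w1 d0 d1 x) rfl
    rw [← ht.1, ← ht.2]
    exact hz
  have ctr : Continuous (fun M : Mat => M.trace) := continuous_id.matrix_trace
  have hDY := hY.const_mul Dh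
  have t1 := (ctr.tendsto _).comp hDY
  have t2 := (ctr.tendsto _).comp (hDY.mul hDY)
  have k1 := tendsto_nhds_unique (t1.congr' (f₂ := fun _ => 2 * cos (π * (γ0 + 1) / 4) + 2 * cos (π * (γ1 + 3) / 4))
    (by filter_upwards [eventually_gt_atTop 0] with x hx; exact (key x hx).1)) tendsto_const_nhds
  have k2 := tendsto_nhds_unique (t2.congr' (f₂ := fun _ => 4 * cos (π * (γ0 + 1) / 4) ^ 2 + 4 * cos (π * (γ1 + 3) / 4) ^ 2 - 4)
    (by filter_upwards [eventually_gt_atTop 0] with x hx; exact (key x hx).2)) tendsto_const_nhds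
  have z1 : ∀ f g, (Dh * Zm f g).trace = -f := by
    intro f g
    unfold Dh Zm
    simp [Matrix.trace, Fin.sum_univ_four]
  have z2 : ∀ f g, (Dh * Zm f g * (Dh * Zm f g)).trace = f^2 - 2*g := by
    intro f g
    unfold Dh Zm
    simp [Matrix.trace, Fin.sum_univ_four]
    ring
  rw [z1] at k1
  rw [z2] at k2
  constructor
  · linear_combination k1
  · generalize sqrt (2*π/4) = c at *
    generalize (-A + -A) * sqrt (2*π/(2*sqrt 2)) = f at *
    generalize cos (π * (γ0 + 1) / 4) = a at *
    generalize cos (π * (γ1 + 3) / 4) = b at *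
    have : f^2 = (2*a+2*b)^2 := by rw [← k1]; ring
    linear_combination (1/2) * k2 - (1/2) * this
end TT

namespace TT
open Set Topology

lemma smooth_deriv {w : ℝ → ℝ} (h : ContDiffOn ℝ (⊤ : ℕ∞) w (Set.Ioi 0)) :
    (∀ r > 0, HasDerivAt w (deriv w r) r) ∧ ∀ r > 0, HasDerivAt (deriv w) (deriv (deriv w) r) r := by
  have h2 : ContDiffOn ℝ (⊤ : ℕ∞) (deriv w) (Set.Ioi 0) := h.deriv_of_isOpen isOpen_Ioi (by simp)
  have d : ∀ {f : ℝ → ℝ}, ContDiffOn ℝ (⊤ : ℕ∞) f (Set.Ioi 0) → ∀ r > 0, HasDerivAt f (deriv f r) r :=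
    fun hf r hr => ((hf.differentiableOn (by simp)).differentiableAt (Ioi_mem_nhds hr)).hasDerivAt
  exact ⟨d h, d h2⟩

lemma const1 : (2:ℝ) ^ ((3:ℝ)/4) * sqrt π = 2 * sqrt (2*π/(2*sqrt 2)) := by
  have hp := pi_pos
  have q2 : sqrt 2 * sqrt 2 = 2 := mul_self_sqrt (by norm_num)
  have p2 : 0 < sqrt 2 := by positivity
  have e : ((2:ℝ) ^ ((3:ℝ)/4)) ^ 2 = 2 * sqrt 2 := by
    rw [← rpow_natCast, ← rpow_mul (by norm_num), sqrt_eq_rpow]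
    nth_rw 2 [← rpow_one 2]
    rw [← rpow_add (by norm_num)]; norm_num
  refine (pow_left_inj₀ (by positivity) (by positivity) (two_ne_zero)).1 ?_
  rw [mul_pow, mul_pow, e, sq_sqrt hp.le, sq_sqrt (by positivity)]
  field_simp
  nlinarith

lemma const2 : (2:ℝ) ^ ((3:ℝ)/2) * sqrt π = 4 * sqrt (2*π/4) := by
  have hp := pi_pos
  have e : ((2:ℝ) ^ ((3:ℝ)/2)) ^ 2 = 8 := by
    rw [← rpow_natCast, ← rpow_mul (by norm_num)]; norm_num
  refine (pow_left_inj₀ (by positivity) (by positivity) (two_ne_zero)).1 ?_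
  rw [mul_pow, mul_pow, e, sq_sqrt hp.le, sq_sqrt (by positivity)]
  ring

lemma main {γ0 γ1 : ℝ}
    (hγ0 : -1 < γ0) (hγ1 : γ1 < 1) (hγ : γ1 > γ0 - 2)
    {w0 w1 : ℝ → ℝ}
    (hsmooth0 : ContDiffOn ℝ (⊤ : ℕ∞) w0 (Set.Ioi 0)) (hsmooth1 : ContDiffOn ℝ (⊤ : ℕ∞) w1 (Set.Ioi 0))
    (hsol : IsRadialTTStar w0 w1)
    (hlim0 : Tendsto w0 atTop (nhds 0)) (hlim1 : Tendsto w1 atTop (nhds 0))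
    (hγ0lim : Tendsto (fun r => 2 * w0 r / Real.log r) (nhdsWithin 0 (Set.Ioi 0)) (nhds γ0))
    (hγ1lim : Tendsto (fun r => 2 * w1 r / Real.log r) (nhdsWithin 0 (Set.Ioi 0)) (nhds γ1)) :
    ∃ A B : ℝ, Tendsto (fun r => sqrt r * exp (2 * sqrt 2 * r) * (w0 r + w1 r)) atTop (𝓝 A) ∧
      Tendsto (fun r => sqrt r * exp (4 * r) * (w0 r - w1 r)) atTop (𝓝 B) ∧
      2 * A * sqrt (2*π/(2*sqrt 2)) = 2 * cos (π * (γ0 + 1) / 4) + 2 * cos (π * (γ1 + 3) / 4) ∧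
      4 * B * sqrt (2*π/4) = -2 - 4 * cos (π * (γ0 + 1) / 4) * cos (π * (γ1 + 3) / 4) := by
  obtain ⟨a0, b0⟩ := smooth_deriv hsmooth0
  obtain ⟨a1, b1⟩ := smooth_deriv hsmooth1
  have o0 : ∀ r > 0, deriv (deriv w0) r + deriv w0 r / r = 2 * (exp (4 * w0 r) - exp (2 * w1 r - 2 * w0 r)) := by
    intro r hr
    rw [← (hsol r hr).1]; field_simp
  have o1 : ∀ r > 0, deriv (deriv w1) r + deriv w1 r / r = 2 * (exp (2 * w1 r - 2 * w0 r) - exp (-(4 * w1 r))) := by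
    intro r hr
    rw [← (hsol r hr).2]; field_simp
  have H : Sol w0 w1 (deriv w0) (deriv w1) := by
    refine ⟨a0, a1, fun r hr => ?_, fun r hr => ?_⟩
    · refine ((hasDerivAt_id r).mul (b0 r hr)).congr_deriv ?_
      have := o0 r hr
      simp only [id]
      rw [mul_assoc, mul_left_comm, ← this]; field_simp; ring
    · refine ((hasDerivAt_id r).mul (b1 r hr)).congr_deriv ?_
      have := o1 r hr
      simp only [id]
      rw [mul_assoc, mul_left_comm, ← this]; field_simp; ring
  have lu : Tendsto (fun r => w0 r + w1 r) atTop (𝓝 0) := by simpa using hlim0.add hlim1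
  have lv : Tendsto (fun r => w0 r - w1 r) atTop (𝓝 0) := by simpa using hlim0.sub hlim1
  have y1 : ∀ r, exp (4 * w0 r) = exp (2 * (w0 r - w1 r)) * exp (2 * (w0 r + w1 r)) := fun r => by
    rw [← exp_add]; ring_nf
  have y2 : ∀ r, exp (-(4 * w1 r)) = exp (2 * (w0 r - w1 r)) * exp (-(2 * (w0 r + w1 r))) := fun r => by
    rw [← exp_add]; ring_nf
  have y3 : ∀ r, exp (2 * w1 r - 2 * w0 r) = exp (-(2 * (w0 r - w1 r))) := fun r => by ring_nf
  obtain ⟨A, B, hA, hA1, hB, hB1⟩ := asymp_inf (u := fun r => w0 r + w1 r) (v := fun r => w0 r - w1 r)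
    (fun r hr => (a0 r hr).add (a1 r hr)) (fun r hr => (b0 r hr).add (b1 r hr))
    (fun r hr => (a0 r hr).sub (a1 r hr)) (fun r hr => (b0 r hr).sub (b1 r hr))
    (by
      intro r hr
      have h0 := o0 r hr
      have h1 := o1 r hr
      rw [y1, y3] at h0
      rw [y2, y3] at h1
      rw [sinh_eq]
      linear_combination h0 + h1)
    (by
      intro r hr
      have h0 := o0 r hr
      have h1 := o1 r hr
      rw [y1, y3] at h0
      rw [y2, y3] at h1
      rw [sinh_eq, cosh_eq]
      linear_combination h0 - h1) lu lv
  exact ⟨A, B, hA, hB, conn H hγ0 hγ1 hγ hγ0lim hγ1lim (fun _ => rfl) (fun _ => rfl) (fun _ => rfl) (fun _ => rfl)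
    lu lv hA hA1 hB hB1⟩
end TT

/-- Stokes asymptotics at `r = ∞`: for a smooth solution of the radial tt* system (case 4a)
with asymptotic data `(γ0, γ1)` in the open triangle,
`(w0 + w1)·2^{3/4}·(π r)^{1/2}·e^{2√2 r} → −s1` and
`(w0 − w1)·2^{3/2}·(π r)^{1/2}·e^{4r} → s2` as `r → ∞`, where `(s1, s2)` is given by the
connection formula. -/
theorem stokes_asymptotics_at_infinity (γ0 γ1 : ℝ)
    (hγ0 : -1 < γ0) (hγ1 : γ1 < 1) (hγ : γ1 > γ0 - 2)
    (w0 w1 : ℝ → ℝ)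
    (hsmooth0 : ContDiffOn ℝ (⊤ : ℕ∞) w0 (Set.Ioi 0)) (hsmooth1 : ContDiffOn ℝ (⊤ : ℕ∞) w1 (Set.Ioi 0))
    (hsol : IsRadialTTStar w0 w1)
    (hlim0 : Tendsto w0 atTop (nhds 0)) (hlim1 : Tendsto w1 atTop (nhds 0))
    (hγ0lim : Tendsto (fun r => 2 * w0 r / Real.log r) (nhdsWithin 0 (Set.Ioi 0)) (nhds γ0))
    (hγ1lim : Tendsto (fun r => 2 * w1 r / Real.log r) (nhdsWithin 0 (Set.Ioi 0)) (nhds γ1))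
    (s1 s2 : ℝ)
    (hs1 : s1 = -2 * Real.cos (π * (γ0 + 1) / 4) - 2 * Real.cos (π * (γ1 + 3) / 4))
    (hs2 : s2 = -2 - 4 * Real.cos (π * (γ0 + 1) / 4) * Real.cos (π * (γ1 + 3) / 4)) :
    Tendsto (fun r => (w0 r + w1 r) * (2:ℝ) ^ ((3:ℝ)/4) * Real.sqrt (π * r) *
        Real.exp (2 * Real.sqrt 2 * r)) atTop (nhds (-s1)) ∧
    Tendsto (fun r => (w0 r - w1 r) * (2:ℝ) ^ ((3:ℝ)/2) * Real.sqrt (π * r) *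
        Real.exp (4 * r)) atTop (nhds s2) := by
  obtain ⟨A, B, hA, hB, kA, kB⟩ := TT.main hγ0 hγ1 hγ hsmooth0 hsmooth1 hsol hlim0 hlim1 hγ0lim hγ1lim
  have hp := pi_pos
  constructor
  · have h := hA.const_mul ((2:ℝ) ^ ((3:ℝ)/4) * Real.sqrt π)
    have e : (2:ℝ) ^ ((3:ℝ)/4) * Real.sqrt π * A = -s1 := by
      rw [TT.const1, hs1]; linear_combination kA
    rw [e] at h
    refine h.congr fun r => ?_
    rw [Real.sqrt_mul hp.le]; ring
  · have h := hB.const_mul ((2:ℝ) ^ ((3:ℝ)/2) * Real.sqrt π)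
    have e : (2:ℝ) ^ ((3:ℝ)/2) * Real.sqrt π * B = s2 := by
      rw [TT.const2, hs2]; linear_combination kB
    rw [e] at h
    refine h.congr fun r => ?_
    rw [Real.sqrt_mul hp.le]; ring
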